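/- arXiv:2011.02393 — 3 statements merged into one kernel-verified Lean document; each statement's English description precedes it below -/
import Mathlib

section
/- For every integer w ≥ 4, the weighted sum of triple T-values satisfies ∑_{a+b+c=w, a≥2, b,c≥1} 2^b (3^{a-1} − 1) · T(a,b,c) = (2/3)(w−1)(w−2) · T(w). -/
open Filter

/-- Depth-1 Euler sum `ζ(s; e) = ∑_{n ≥ 1} eⁿ / nˢ`,
defined as the limit of partial sums. `e = 1` gives `ζ(s)`, `e = -1` gives `ζ(s̄)`. -/
noncomputable def eulerSum1 (s : ℕ) (e : ℝ) : ℝ :=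
  limUnder atTop (fun N : ℕ =>
    ∑ n ∈ Finset.Icc 1 N, e ^ n / (n : ℝ) ^ s)

/-- Depth-2 Euler sum `ζ(s₁, s₂; e₁, e₂) = ∑_{n₁ > n₂ ≥ 1} e₁^{n₁} e₂^{n₂} / (n₁^{s₁} n₂^{s₂})`,
defined as the limit of iterated partial sums. A bar over an argument means the
corresponding sign is `-1`. -/
noncomputable def eulerSum2 (s₁ s₂ : ℕ) (e₁ e₂ : ℝ) : ℝ :=
  limUnder atTop (fun N : ℕ =>
    ∑ n₁ ∈ Finset.Icc 1 N, ∑ n₂ ∈ Finset.Ico 1 n₁,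
      e₁ ^ n₁ * e₂ ^ n₂ / ((n₁ : ℝ) ^ s₁ * (n₂ : ℝ) ^ s₂))

/-- Depth-3 Euler sum
`ζ(s₁, s₂, s₃; e₁, e₂, e₃) = ∑_{n₁ > n₂ > n₃ ≥ 1} e₁^{n₁} e₂^{n₂} e₃^{n₃} / (n₁^{s₁} n₂^{s₂} n₃^{s₃})`. -/
noncomputable def eulerSum3 (s₁ s₂ s₃ : ℕ) (e₁ e₂ e₃ : ℝ) : ℝ :=
  limUnder atTop (fun N : ℕ =>
    ∑ n₁ ∈ Finset.Icc 1 N, ∑ n₂ ∈ Finset.Ico 1 n₁, ∑ n₃ ∈ Finset.Ico 1 n₂,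
      e₁ ^ n₁ * e₂ ^ n₂ * e₃ ^ n₃ / ((n₁ : ℝ) ^ s₁ * (n₂ : ℝ) ^ s₂ * (n₃ : ℝ) ^ s₃))

/-- Depth-1 multiple T-value `T(s) = 2 ∑_{m odd, m ≥ 1} 1 / mˢ`. -/
noncomputable def tValue1 (s : ℕ) : ℝ :=
  limUnder atTop (fun N : ℕ =>
    ∑ m ∈ Finset.Icc 1 N, if m % 2 = 1 then 2 / (m : ℝ) ^ s else 0)

/-- Depth-2 multiple T-value
`T(s₁, s₂) = ∑_{m₁ > m₂ > 0, m₁ even, m₂ odd} 4 / (m₁^{s₁} m₂^{s₂})`. -/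
noncomputable def tValue2 (s₁ s₂ : ℕ) : ℝ :=
  limUnder atTop (fun N : ℕ =>
    ∑ m₁ ∈ Finset.Icc 1 N, ∑ m₂ ∈ Finset.Ico 1 m₁,
      if m₁ % 2 = 0 ∧ m₂ % 2 = 1 then 4 / ((m₁ : ℝ) ^ s₁ * (m₂ : ℝ) ^ s₂) else 0)

/-- Depth-3 multiple T-value
`T(s₁, s₂, s₃) = ∑_{m₁ > m₂ > m₃ > 0, m₁ odd, m₂ even, m₃ odd} 8 / (m₁^{s₁} m₂^{s₂} m₃^{s₃})`. -/
noncomputable def tValue3 (s₁ s₂ s₃ : ℕ) : ℝ :=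
  limUnder atTop (fun N : ℕ =>
    ∑ m₁ ∈ Finset.Icc 1 N, ∑ m₂ ∈ Finset.Ico 1 m₁, ∑ m₃ ∈ Finset.Ico 1 m₂,
      if m₁ % 2 = 1 ∧ m₂ % 2 = 0 ∧ m₃ % 2 = 1 then
        8 / ((m₁ : ℝ) ^ s₁ * (m₂ : ℝ) ^ s₂ * (m₃ : ℝ) ^ s₃) else 0)

namespace TripleT

/-- The shifted harmonic weight `1 / (i + τ)`. -/
noncomputable def wt (τ : ℝ) (i : ℕ) : ℝ := ((i : ℝ) + τ)⁻¹

theorem wt_nonneg {τ : ℝ} (hτ : 0 < τ) (i : ℕ) : 0 ≤ wt τ i := by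
  unfold wt; positivity

theorem add_mul_wt {τ : ℝ} (hτ : 0 < τ) (i : ℕ) : ((i : ℝ) + τ) * wt τ i = 1 := by
  unfold wt
  have : (i : ℝ) + τ ≠ 0 := by positivity
  field_simp

theorem sum_ite_add_eq {n a s : ℕ} (ha : a < n) (v : ℝ) :
    (∑ i ∈ Finset.range n, if i + s = a then v else 0) = if s ≤ a then v else 0 := by
  split_ifs with h
  · rw [Finset.sum_eq_single_of_mem (a - s) (Finset.mem_range.2 (by omega))]
    · simp [h]
    · intro b _ hb
      exact if_neg (by omega)
  · exact Finset.sum_eq_zero fun b _ => if_neg (by omega)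

theorem sum_ite_eq_lt (N s : ℕ) (v : ℝ) :
    (∑ a ∈ Finset.range N, if s = a then v else 0) = if s < N then v else 0 := by
  simp [Finset.sum_ite_eq]

/-- Sum of `wt i * wt j` over `i + j = b`, by the partial fraction shuffle. -/
theorem sum_pair_wt {τ : ℝ} (hτ : 0 < τ) {n b : ℕ} (hb : b < n) :
    (∑ i ∈ Finset.range n, ∑ j ∈ Finset.range n, if i + j = b then wt τ i * wt τ j else 0)
      = 2 * ((b : ℝ) + 2 * τ)⁻¹ * ∑ c ∈ Finset.range (b + 1), wt τ c := by
  have hb0 : (b : ℝ) + 2 * τ ≠ 0 := by positivity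
  have key : (∑ i ∈ Finset.range n, ∑ j ∈ Finset.range n,
      if i + j = b then wt τ j else 0) = ∑ c ∈ Finset.range (b + 1), wt τ c := by
    rw [Finset.sum_comm]
    have : ∀ j ∈ Finset.range n, (∑ i ∈ Finset.range n, if i + j = b then wt τ j else 0)
        = if j ≤ b then wt τ j else 0 := by
      intro j _
      exact sum_ite_add_eq hb _
    rw [Finset.sum_congr rfl this, ← Finset.sum_filter]
    congr 1
    ext j; simp; omega
  have h2 : ((b : ℝ) + 2 * τ) * (∑ i ∈ Finset.range n, ∑ j ∈ Finset.range n,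
      if i + j = b then wt τ i * wt τ j else 0) = (∑ i ∈ Finset.range n, ∑ j ∈ Finset.range n,
      if i + j = b then wt τ j else 0) + ∑ i ∈ Finset.range n, ∑ j ∈ Finset.range n,
      if j + i = b then wt τ i else 0 := by
    simp only [Finset.mul_sum, ← Finset.sum_add_distrib]
    refine Finset.sum_congr rfl fun i _ => Finset.sum_congr rfl fun j _ => ?_
    rw [add_comm j i]
    split_ifs with h
    · rw [← h]
      push_cast
      linear_combination wt τ j * add_mul_wt hτ i + wt τ i * add_mul_wt hτ j
    · simp
  rw [Finset.sum_comm (f := fun i j => if j + i = b then wt τ i else 0), key] at h2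
  field_simp
  linarith

/-- Sum of `wt i * wt j * wt k` over `i + j + k = a`, by the partial fraction shuffle. -/
theorem sum_triple_wt {τ : ℝ} (hτ : 0 < τ) {n a : ℕ} (ha : a < n) :
    (∑ i ∈ Finset.range n, ∑ j ∈ Finset.range n, ∑ k ∈ Finset.range n,
        if i + j + k = a then wt τ i * wt τ j * wt τ k else 0)
      = 3 * ((a : ℝ) + 3 * τ)⁻¹ * ∑ i ∈ Finset.range n, ∑ j ∈ Finset.range n,
        if i + j ≤ a then wt τ i * wt τ j else 0 := by
  have ha0 : (a : ℝ) + 3 * τ ≠ 0 := by positivity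
  have key : ∀ i j : ℕ, (∑ k ∈ Finset.range n,
      if i + j + k = a then wt τ i * wt τ j else 0) =
        if i + j ≤ a then wt τ i * wt τ j else 0 := by
    intro i j
    simpa only [add_comm] using sum_ite_add_eq (s := i + j) ha (wt τ i * wt τ j)
  have h3 : ((a : ℝ) + 3 * τ) * (∑ i ∈ Finset.range n, ∑ j ∈ Finset.range n,
      ∑ k ∈ Finset.range n, if i + j + k = a then wt τ i * wt τ j * wt τ k else 0) =
      (∑ i ∈ Finset.range n, ∑ j ∈ Finset.range n, ∑ k ∈ Finset.range n,
        if i + j + k = a then wt τ i * wt τ j else 0) +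
      (∑ i ∈ Finset.range n, ∑ j ∈ Finset.range n, ∑ k ∈ Finset.range n,
        if i + k + j = a then wt τ i * wt τ k else 0) +
      (∑ i ∈ Finset.range n, ∑ j ∈ Finset.range n, ∑ k ∈ Finset.range n,
        if j + k + i = a then wt τ j * wt τ k else 0) := by
    simp only [Finset.mul_sum, ← Finset.sum_add_distrib]
    refine Finset.sum_congr rfl fun i _ => Finset.sum_congr rfl fun j _ =>
      Finset.sum_congr rfl fun k _ => ?_
    rw [show i + k + j = i + j + k by ring, show j + k + i = i + j + k by ring]
    split_ifs with h
    · rw [← h]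
      push_cast
      linear_combination wt τ j * wt τ k * add_mul_wt hτ i + wt τ i * wt τ k * add_mul_wt hτ j
        + wt τ i * wt τ j * add_mul_wt hτ k
    · simp
  have e2 : (∑ i ∈ Finset.range n, ∑ j ∈ Finset.range n, ∑ k ∈ Finset.range n,
        if i + k + j = a then wt τ i * wt τ k else 0) =
      ∑ i ∈ Finset.range n, ∑ k ∈ Finset.range n, ∑ j ∈ Finset.range n,
        if i + k + j = a then wt τ i * wt τ k else 0 :=
    Finset.sum_congr rfl fun i _ => Finset.sum_comm
  have e3 : (∑ i ∈ Finset.range n, ∑ j ∈ Finset.range n, ∑ k ∈ Finset.range n,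
        if j + k + i = a then wt τ j * wt τ k else 0) =
      ∑ j ∈ Finset.range n, ∑ k ∈ Finset.range n, ∑ i ∈ Finset.range n,
        if j + k + i = a then wt τ j * wt τ k else 0 := by
    rw [Finset.sum_comm]
    exact Finset.sum_congr rfl fun i _ => Finset.sum_comm
  rw [e2, e3] at h3
  simp only [key] at h3
  field_simp
  linarith

/-- Pair sums over `i + j ≤ a` as nested sums. -/
theorem sum_pair_le_wt {τ : ℝ} (hτ : 0 < τ) {n a : ℕ} (ha : a < n) :
    (∑ i ∈ Finset.range n, ∑ j ∈ Finset.range n,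
        if i + j ≤ a then wt τ i * wt τ j else 0)
      = 2 * ∑ b ∈ Finset.range (a + 1), ∑ c ∈ Finset.range (b + 1),
        ((b : ℝ) + 2 * τ)⁻¹ * wt τ c := by
  have h1 : ∀ b ∈ Finset.range (a + 1), 2 * ∑ c ∈ Finset.range (b + 1),
        ((b : ℝ) + 2 * τ)⁻¹ * wt τ c = ∑ i ∈ Finset.range n, ∑ j ∈ Finset.range n,
          if i + j = b then wt τ i * wt τ j else 0 := by
    intro b hb
    rw [sum_pair_wt hτ (by have := Finset.mem_range.1 hb; omega), ← Finset.mul_sum]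
    ring
  rw [Finset.mul_sum, Finset.sum_congr rfl h1, Finset.sum_comm (s := Finset.range (a + 1))]
  refine Finset.sum_congr rfl fun i _ => ?_
  rw [Finset.sum_comm]
  refine Finset.sum_congr rfl fun j _ => ?_
  simpa only [Nat.lt_succ_iff] using (sum_ite_eq_lt (a + 1) (i + j) (wt τ i * wt τ j)).symm

/-- The truncated triple sum generating the weighted combination of triple `T`-values. -/
noncomputable def trunc (τ : ℝ) (N : ℕ) : ℝ :=
  6 * ∑ a ∈ Finset.range N, ∑ b ∈ Finset.range (a + 1), ∑ c ∈ Finset.range (b + 1),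
    (((a : ℝ) + 3 * τ)⁻¹ - ((a : ℝ) + 1 + τ)⁻¹) * (((b : ℝ) + 2 * τ)⁻¹ * wt τ c)

/-- Sum of `f i j k` over the cube `{0, …, N}³`. -/
noncomputable def cube (N : ℕ) (f : ℕ → ℕ → ℕ → ℝ) : ℝ :=
  ∑ i ∈ Finset.range (N + 1), ∑ j ∈ Finset.range (N + 1), ∑ k ∈ Finset.range (N + 1), f i j k

theorem cube_rotate (N : ℕ) (f : ℕ → ℕ → ℕ → ℝ) :
    cube N (fun i j k => f j k i) = cube N f := by
  unfold cube
  rw [Finset.sum_comm]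
  exact Finset.sum_congr rfl fun i _ => Finset.sum_comm

theorem cube_add (N : ℕ) (f g : ℕ → ℕ → ℕ → ℝ) :
    cube N (fun i j k => f i j k + g i j k) = cube N f + cube N g := by
  simp [cube, Finset.sum_add_distrib]

theorem cube_sub (N : ℕ) (f g : ℕ → ℕ → ℕ → ℝ) :
    cube N (fun i j k => f i j k - g i j k) = cube N f - cube N g := by
  simp [cube, Finset.sum_sub_distrib]

theorem cube_mul_left (N : ℕ) (c : ℝ) (f : ℕ → ℕ → ℕ → ℝ) :
    cube N (fun i j k => c * f i j k) = c * cube N f := by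
  simp [cube, Finset.mul_sum]

/-- Indices whose associated odd numbers `2i+1, 2j+1, 2k+1` are the sides of a triangle. -/
def Tri (i j k : ℕ) : Prop := i ≤ j + k ∧ j ≤ k + i ∧ k ≤ i + j

instance (i j k : ℕ) : Decidable (Tri i j k) := by unfold Tri; infer_instance

theorem trunc_eq {τ : ℝ} (hτ : 0 < τ) (N : ℕ) :
    trunc τ N = cube N (fun i j k => if Tri i j k then wt τ i * wt τ j * wt τ k else 0)
      - cube N (fun i j k => if N ≤ i + j + k then wt τ i * wt τ j * wt τ k else 0) := by
  have h1 : 6 * ∑ a ∈ Finset.range N, ∑ b ∈ Finset.range (a + 1), ∑ c ∈ Finset.range (b + 1),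
      ((a : ℝ) + 3 * τ)⁻¹ * (((b : ℝ) + 2 * τ)⁻¹ * wt τ c)
      = cube N (fun i j k => if i + j + k < N then wt τ i * wt τ j * wt τ k else 0) := by
    have : ∀ a ∈ Finset.range N, 6 * ∑ b ∈ Finset.range (a + 1), ∑ c ∈ Finset.range (b + 1),
      ((a : ℝ) + 3 * τ)⁻¹ * (((b : ℝ) + 2 * τ)⁻¹ * wt τ c) =
        cube N (fun i j k => if i + j + k = a then wt τ i * wt τ j * wt τ k else 0) := by
      intro a ha
      have ha' : a < N + 1 := by have := Finset.mem_range.1 ha; omega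
      unfold cube
      rw [sum_triple_wt hτ ha', sum_pair_le_wt hτ ha']
      simp only [← Finset.mul_sum]
      ring
    rw [Finset.mul_sum, Finset.sum_congr rfl this]
    unfold cube
    rw [Finset.sum_comm]
    refine Finset.sum_congr rfl fun i _ => ?_
    rw [Finset.sum_comm]
    refine Finset.sum_congr rfl fun j _ => ?_
    rw [Finset.sum_comm]
    refine Finset.sum_congr rfl fun k _ => ?_
    exact sum_ite_eq_lt N (i + j + k) _
  have h2 : 6 * ∑ a ∈ Finset.range N, ∑ b ∈ Finset.range (a + 1), ∑ c ∈ Finset.range (b + 1),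
      ((a : ℝ) + 1 + τ)⁻¹ * (((b : ℝ) + 2 * τ)⁻¹ * wt τ c)
      = 3 * cube N (fun i j k => if j + k < i then wt τ i * wt τ j * wt τ k else 0) := by
    have : ∀ a ∈ Finset.range N, 6 * ∑ b ∈ Finset.range (a + 1), ∑ c ∈ Finset.range (b + 1),
      ((a : ℝ) + 1 + τ)⁻¹ * (((b : ℝ) + 2 * τ)⁻¹ * wt τ c) =
        3 * ∑ j ∈ Finset.range (N + 1), ∑ k ∈ Finset.range (N + 1),
          if j + k < a + 1 then wt τ (a + 1) * wt τ j * wt τ k else 0 := by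
      intro a ha
      have ha' : a < N + 1 := by have := Finset.mem_range.1 ha; omega
      have := sum_pair_le_wt hτ ha'
      have e : wt τ (a + 1) = ((a : ℝ) + 1 + τ)⁻¹ := by simp [wt]
      rw [← e]
      have e2 : (∑ j ∈ Finset.range (N + 1), ∑ k ∈ Finset.range (N + 1),
          if j + k < a + 1 then wt τ (a + 1) * wt τ j * wt τ k else 0) = wt τ (a + 1) *
          ∑ j ∈ Finset.range (N + 1), ∑ k ∈ Finset.range (N + 1),
          if j + k ≤ a then wt τ j * wt τ k else 0 := by
        simp only [Finset.mul_sum, mul_ite, mul_zero, Nat.lt_succ_iff, mul_assoc]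
      rw [e2, this]
      simp only [← Finset.mul_sum]
      ring
    rw [Finset.mul_sum, Finset.sum_congr rfl this, ← Finset.mul_sum]
    unfold cube
    rw [Finset.sum_range_succ' _ N]
    simp
  have h3 : cube N (fun i j k => if i + j + k < N then wt τ i * wt τ j * wt τ k else 0)
      = cube N (fun i j k => if Tri i j k then wt τ i * wt τ j * wt τ k else 0)
      + cube N (fun i j k => if j + k < i then wt τ i * wt τ j * wt τ k else 0)
      + cube N (fun i j k => if k + i < j then wt τ j * wt τ k * wt τ i else 0)
      + cube N (fun i j k => if i + j < k then wt τ k * wt τ i * wt τ j else 0)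
      - cube N (fun i j k => if N ≤ i + j + k then wt τ i * wt τ j * wt τ k else 0) := by
    rw [← cube_add, ← cube_add, ← cube_add, ← cube_sub]
    congr 1
    funext i j k
    rw [show wt τ j * wt τ k * wt τ i = wt τ i * wt τ j * wt τ k by ring,
      show wt τ k * wt τ i * wt τ j = wt τ i * wt τ j * wt τ k by ring]
    by_cases c0 : i + j + k < N
    · rw [if_pos c0, if_neg (c := N ≤ i + j + k) (by omega)]
      by_cases c1 : j + k < i
      · rw [if_pos c1, if_neg (c := Tri i j k) (by unfold Tri; omega), if_neg (by omega),
          if_neg (by omega)]; ring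
      by_cases c2 : k + i < j
      · rw [if_pos c2, if_neg (c := Tri i j k) (by unfold Tri; omega), if_neg c1,
          if_neg (by omega)]; ring
      by_cases c3 : i + j < k
      · rw [if_pos c3, if_neg (c := Tri i j k) (by unfold Tri; omega), if_neg c1,
          if_neg c2]; ring
      · rw [if_pos (c := Tri i j k) (by unfold Tri; omega), if_neg c1, if_neg c2, if_neg c3]; ring
    · rw [if_neg c0, if_pos (c := N ≤ i + j + k) (by omega)]
      by_cases c1 : j + k < i
      · rw [if_pos c1, if_neg (c := Tri i j k) (by unfold Tri; omega), if_neg (by omega),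
          if_neg (by omega)]; ring
      by_cases c2 : k + i < j
      · rw [if_pos c2, if_neg (c := Tri i j k) (by unfold Tri; omega), if_neg c1,
          if_neg (by omega)]; ring
      by_cases c3 : i + j < k
      · rw [if_pos c3, if_neg (c := Tri i j k) (by unfold Tri; omega), if_neg c1,
          if_neg c2]; ring
      · rw [if_pos (c := Tri i j k) (by unfold Tri; omega), if_neg c1, if_neg c2, if_neg c3]; ring
  have r1 := cube_rotate N (fun i j k => if j + k < i then wt τ i * wt τ j * wt τ k else 0)
  have r2 := cube_rotate N (fun i j k => if k + i < j then wt τ j * wt τ k * wt τ i else 0)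
  have : trunc τ N = 6 * (∑ a ∈ Finset.range N, ∑ b ∈ Finset.range (a + 1),
      ∑ c ∈ Finset.range (b + 1), ((a : ℝ) + 3 * τ)⁻¹ * (((b : ℝ) + 2 * τ)⁻¹ * wt τ c)) -
      6 * ∑ a ∈ Finset.range N, ∑ b ∈ Finset.range (a + 1), ∑ c ∈ Finset.range (b + 1),
      ((a : ℝ) + 1 + τ)⁻¹ * (((b : ℝ) + 2 * τ)⁻¹ * wt τ c) := by
    unfold trunc
    rw [← mul_sub]
    simp only [← Finset.sum_sub_distrib, sub_mul]
  rw [this, h1, h2, h3]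
  linarith

/-- Real harmonic numbers. -/
noncomputable def harm (n : ℕ) : ℝ := ∑ k ∈ Finset.range n, ((k : ℝ) + 1)⁻¹

theorem harm_succ (n : ℕ) : harm (n + 1) = harm n + ((n : ℝ) + 1)⁻¹ :=
  Finset.sum_range_succ _ _

theorem harm_nonneg (n : ℕ) : 0 ≤ harm n := Finset.sum_nonneg fun _ _ => by positivity

theorem inv_sqrt_succ_le (n : ℕ) :
    (Real.sqrt ((n : ℝ) + 1))⁻¹ ≤ 2 * (Real.sqrt ((n : ℝ) + 1) - Real.sqrt n) := by
  have h0 : (0 : ℝ) ≤ n := Nat.cast_nonneg n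
  have hs : 0 < Real.sqrt ((n : ℝ) + 1) := Real.sqrt_pos.2 (by positivity)
  have h1 := Real.sq_sqrt h0
  have h2 := Real.sq_sqrt (by positivity : (0 : ℝ) ≤ (n : ℝ) + 1)
  rw [inv_le_iff_one_le_mul₀ hs]
  nlinarith [sq_nonneg (Real.sqrt ((n : ℝ) + 1) - Real.sqrt n)]

theorem harm_le (n : ℕ) : harm n ≤ 2 * Real.sqrt n := by
  induction n with
  | zero => simp [harm]
  | succ n ih =>
    rw [harm_succ]
    push_cast
    have h1 := inv_sqrt_succ_le n
    have h2 : ((n : ℝ) + 1)⁻¹ ≤ (Real.sqrt ((n : ℝ) + 1))⁻¹ := by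
      apply inv_anti₀ (Real.sqrt_pos.2 (by positivity))
      rw [Real.sqrt_le_left (by positivity)]
      nlinarith [(Nat.cast_nonneg n : (0 : ℝ) ≤ n)]
    linarith

theorem harm_succ_div_le (n : ℕ) :
    harm (n + 1) * ((n : ℝ) + 1)⁻¹ ≤ 2 * (Real.sqrt ((n : ℝ) + 1))⁻¹ := by
  have h := harm_le (n + 1)
  have hs : 0 < Real.sqrt ((n : ℝ) + 1) := Real.sqrt_pos.2 (by positivity)
  have h2 : ((n : ℝ) + 1) = Real.sqrt ((n : ℝ) + 1) * Real.sqrt ((n : ℝ) + 1) :=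
    (Real.mul_self_sqrt (by positivity)).symm
  push_cast at h
  calc harm (n + 1) * ((n : ℝ) + 1)⁻¹ ≤ 2 * Real.sqrt ((n : ℝ) + 1) * ((n : ℝ) + 1)⁻¹ := by
        gcongr
    _ = 2 * (Real.sqrt ((n : ℝ) + 1))⁻¹ := by
        nth_rewrite 2 [h2]
        field_simp

theorem hasSum_inv_mul_inv_add (d : ℕ) :
    HasSum (fun n : ℕ => ((n : ℝ) + 1)⁻¹ * ((n : ℝ) + 1 + (d + 1))⁻¹)
      (harm (d + 1) * ((d : ℝ) + 1)⁻¹) := by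
  rw [hasSum_iff_tendsto_nat_of_nonneg (fun n => by positivity)]
  have hp : ∀ M : ℕ, ∑ n ∈ Finset.range M, ((n : ℝ) + 1)⁻¹ * ((n : ℝ) + 1 + (d + 1))⁻¹
      = (harm (d + 1) - ∑ k ∈ Finset.range (d + 1), ((M : ℝ) + k + 1)⁻¹) * ((d : ℝ) + 1)⁻¹ := by
    intro M
    induction M with
    | zero => simp [harm]
    | succ M ih =>
      rw [Finset.sum_range_succ, ih]
      have e := Finset.sum_range_succ' (fun k : ℕ => ((M : ℝ) + k + 1)⁻¹) (d + 1)
      rw [Finset.sum_range_succ (fun k : ℕ => ((M : ℝ) + k + 1)⁻¹) (d + 1)] at e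
      have e2 : ∑ k ∈ Finset.range (d + 1), (((M + 1 : ℕ) : ℝ) + k + 1)⁻¹ =
          ∑ k ∈ Finset.range (d + 1), ((M : ℝ) + ((k + 1 : ℕ) : ℝ) + 1)⁻¹ := by
        refine Finset.sum_congr rfl fun k _ => ?_
        push_cast; ring
      rw [e2]
      have e3 : ∑ k ∈ Finset.range (d + 1), ((M : ℝ) + k + 1)⁻¹ =
          ∑ k ∈ Finset.range (d + 1), ((M : ℝ) + ((k + 1 : ℕ) : ℝ) + 1)⁻¹
            + ((M : ℝ) + 1)⁻¹ - ((M : ℝ) + 1 + (d + 1))⁻¹ := by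
        push_cast at e ⊢
        rw [show (M : ℝ) + 1 + (d + 1) = M + (d + 1) + 1 by ring]
        simp only [add_zero] at e
        linarith
      rw [e3]
      have a1 : (M : ℝ) + 1 ≠ 0 := by positivity
      have a2 : (M : ℝ) + 1 + (d + 1) ≠ 0 := by positivity
      have a3 : (d : ℝ) + 1 ≠ 0 := by positivity
      field_simp
      ring
  simp only [hp]
  have h0 : Tendsto (fun M : ℕ => ∑ k ∈ Finset.range (d + 1), ((M : ℝ) + k + 1)⁻¹) atTop
      (nhds (∑ k ∈ Finset.range (d + 1), (0 : ℝ))) := by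
    refine tendsto_finsetSum _ fun k _ => ?_
    refine tendsto_inv_atTop_zero.comp ?_
    have := tendsto_natCast_atTop_atTop (R := ℝ)
    simpa [add_assoc] using tendsto_atTop_add_const_right atTop ((k : ℝ) + 1) this
  simpa using (h0.const_sub (harm (d + 1))).mul_const (((d : ℝ) + 1)⁻¹)

theorem sum_inv_mul_inv_reflect (d : ℕ) :
    ∑ s ∈ Finset.range d, ((s : ℝ) + 1)⁻¹ * ((d : ℝ) - s)⁻¹ = 2 * harm d * ((d : ℝ) + 1)⁻¹ := by
  have h1 : ∀ s ∈ Finset.range d, ((s : ℝ) + 1)⁻¹ * ((d : ℝ) - s)⁻¹ =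
      (((s : ℝ) + 1)⁻¹ + ((d - 1 - s : ℕ) + 1 : ℝ)⁻¹) * ((d : ℝ) + 1)⁻¹ := by
    intro s hs
    have hs := Finset.mem_range.1 hs
    have c : ((d - 1 - s : ℕ) : ℝ) = (d : ℝ) - 1 - s := by
      rw [Nat.cast_sub (by omega), Nat.cast_sub (by omega)]; simp
    have p : (0 : ℝ) < (d : ℝ) - s := by
      have : (s : ℝ) < d := by exact_mod_cast hs
      linarith
    rw [c, show (d : ℝ) - 1 - s + 1 = d - s by ring]
    field_simp
    ring
  rw [Finset.sum_congr rfl h1, ← Finset.sum_mul, Finset.sum_add_distrib,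
    Finset.sum_range_reflect (fun s : ℕ => ((s : ℝ) + 1)⁻¹) d]
  unfold harm
  ring

/-- `ζ(2)`. -/
noncomputable def zetaTwo : ℝ := ∑' n : ℕ, (((n : ℝ) + 1) ^ 2)⁻¹

theorem hasSum_zetaTwo : HasSum (fun n : ℕ => (((n : ℝ) + 1) ^ 2)⁻¹) zetaTwo := by
  have := (summable_nat_add_iff 1).2 (Real.summable_nat_pow_inv (p := 2).2 (by norm_num))
  refine Summable.hasSum ?_
  simpa using this

theorem hasSum_line (ε : ℝ) (d : ℕ) (u : ℝ → ℝ → ℝ) (h0 : ∀ x, u x 0 = 0) (h0' : ∀ x, u 0 x = 0)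
    (hpos : ∀ x y, 0 < x → 0 < y → u x y = x⁻¹ * y⁻¹)
    (hneg : ∀ x y, 0 < x → 0 < y → u (-x) y = ε * (x⁻¹ * y⁻¹)) :
    HasSum (fun n : ℕ => u ((n : ℝ) - (d + 1)) n)
      (ε * (2 * harm d * ((d : ℝ) + 1)⁻¹) + harm (d + 1) * ((d : ℝ) + 1)⁻¹) := by
  have hfin : ∑ n ∈ Finset.range (d + 2), u ((n : ℝ) - (d + 1)) n =
      ε * (2 * harm d * ((d : ℝ) + 1)⁻¹) := by
    rw [Finset.sum_range_succ, Finset.sum_range_succ']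
    push_cast
    rw [sub_self, h0, h0', ← sum_inv_mul_inv_reflect, Finset.mul_sum, add_zero, add_zero]
    refine Finset.sum_congr rfl fun s hs => ?_
    have hs : (s : ℝ) < d := by exact_mod_cast Finset.mem_range.1 hs
    rw [show (s : ℝ) + 1 - (d + 1) = -((d : ℝ) - s) by ring,
      hneg _ _ (by linarith) (by positivity)]
    ring
  rw [← hfin, add_comm (Finset.sum _ _), ← hasSum_nat_add_iff]
  refine (hasSum_inv_mul_inv_add d).congr_fun fun n => ?_
  push_cast
  rw [show (n : ℝ) + (d + 2) - (d + 1) = n + 1 by ring,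
    show (n : ℝ) + (d + 2) = n + 1 + (d + 1) by ring, hpos _ _ (by positivity) (by positivity)]

/-- The strip `|p - q| ≤ d`, `p + q ≥ -d`: translates of triangles with one side fixed. -/
def Strip (d : ℕ) (x : ℤ × ℤ) : Prop := x.1 - x.2 ≤ d ∧ x.2 - x.1 ≤ d ∧ -(d : ℤ) ≤ x.1 + x.2

instance (d : ℕ) (x : ℤ × ℤ) : Decidable (Strip d x) := by unfold Strip; infer_instance

theorem hasSum_strip_zero (u : ℝ → ℝ → ℝ) (h0 : u 0 0 = 0)
    (hpos : ∀ x y, 0 < x → 0 < y → u x y = x⁻¹ * y⁻¹) :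
    HasSum (fun x : ℤ × ℤ => if Strip 0 x then u x.1 x.2 else 0) zetaTwo := by
  let φ : ℕ → ℤ × ℤ := fun n => (n, n)
  have hφ : Function.Injective φ := fun a b h => by simpa [φ] using h
  rw [← hφ.hasSum_iff]
  · rw [← hasSum_nat_add_iff' 1]
    simp only [Finset.range_one, Finset.sum_singleton, Function.comp]
    have e : (if Strip 0 (φ 0) then u (φ 0).1 (φ 0).2 else 0) = 0 := by simp [φ, h0]
    rw [e, sub_zero]
    refine hasSum_zetaTwo.congr_fun fun n => ?_
    have : Strip 0 (φ (n + 1)) := by simp only [Strip, φ]; omega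
    rw [if_pos this]
    simp only [φ]
    push_cast
    rw [hpos _ _ (by positivity) (by positivity), sq, mul_inv]
  · intro x hx
    refine if_neg fun h => hx ?_
    simp only [Strip] at h
    refine ⟨x.1.toNat, ?_⟩
    ext <;> simp only [φ] <;> omega

theorem hasSum_strip_succ (d : ℕ) (u : ℝ → ℝ → ℝ) (h0 : ∀ x, u x 0 = 0) (h0' : ∀ x, u 0 x = 0)
    {S S₁ : ℝ}
    (hS : HasSum (fun x : ℤ × ℤ => if Strip d x then u x.1 x.2 else 0) S)
    (h₁ : HasSum (fun n : ℕ => u ((n : ℝ) - (d + 1)) n) S₁)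
    (hu : ∀ x y, u x y = u y x) :
    HasSum (fun x : ℤ × ℤ => if Strip (d + 1) x then u x.1 x.2 else 0)
      (S + S₁ + S₁ + ∑ s ∈ Finset.range d, u (-((s : ℝ) + 1)) (-((d : ℝ) - s))) := by
  let φ₁ : ℕ → ℤ × ℤ := fun n => ((n : ℤ) - (d + 1), n)
  let φ₂ : ℕ → ℤ × ℤ := fun n => (n, (n : ℤ) - (d + 1))
  let φ₃ : ℕ → ℤ × ℤ := fun s => (-((s : ℤ) + 1), -((d : ℤ) - s))
  have i₁ : Function.Injective φ₁ := fun a b h => by simpa [φ₁] using h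
  have i₂ : Function.Injective φ₂ := fun a b h => by simpa [φ₂] using h
  have i₃ : Function.Injective φ₃ := fun a b h => by simpa [φ₃] using h
  have k₁ : HasSum (fun x : ℤ × ℤ => if x.2 = x.1 + (d + 1) ∧ 0 ≤ x.2 then u x.1 x.2 else 0)
      S₁ := by
    rw [← i₁.hasSum_iff]
    · convert h₁ using 2 with n
      simp [φ₁]
    · intro x hx
      refine if_neg fun h => hx ⟨x.2.toNat, ?_⟩
      ext <;> simp only [φ₁] <;> omega
  have k₂ : HasSum (fun x : ℤ × ℤ => if x.1 = x.2 + (d + 1) ∧ 0 ≤ x.1 then u x.1 x.2 else 0)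
      S₁ := by
    rw [← i₂.hasSum_iff]
    · convert h₁ using 2 with n
      simpa [φ₂] using hu _ _
    · intro x hx
      refine if_neg fun h => hx ⟨x.1.toNat, ?_⟩
      ext <;> simp only [φ₂] <;> omega
  have k₃ : HasSum (fun x : ℤ × ℤ => if x.1 + x.2 = -((d : ℤ) + 1) ∧ x.1 < 0 ∧ x.2 < 0
      then u x.1 x.2 else 0)
      (∑ s ∈ Finset.range d, u (-((s : ℝ) + 1)) (-((d : ℝ) - s))) := by
    rw [← i₃.hasSum_iff]
    · have : ∑ s ∈ Finset.range d, u (-((s : ℝ) + 1)) (-((d : ℝ) - s)) =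
          ∑ s ∈ Finset.range d, ((fun x : ℤ × ℤ => if x.1 + x.2 = -((d : ℤ) + 1) ∧ x.1 < 0 ∧
            x.2 < 0 then u x.1 x.2 else 0) ∘ φ₃) s := by
        refine Finset.sum_congr rfl fun s hs => ?_
        have hs := Finset.mem_range.1 hs
        simp only [Function.comp, φ₃]
        rw [if_pos (by omega)]
        push_cast
        rfl
      rw [this]
      refine hasSum_sum_of_ne_finset_zero fun s hs => ?_
      have hs := Finset.mem_range.not.1 hs
      simp only [Function.comp, φ₃]
      exact if_neg (by omega)
    · intro x hx
      refine if_neg fun h => hx ⟨(-x.1 - 1).toNat, ?_⟩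
      ext <;> simp only [φ₃] <;> omega
  convert ((hS.add k₁).add k₂).add k₃ using 2 with x
  obtain ⟨p, q⟩ := x
  simp only
  by_cases hp : p = 0
  · simp [hp, h0']
  by_cases hq : q = 0
  · simp [hq, h0]
  have hs : Strip (d + 1) (p, q) ↔ Strip d (p, q) ∨ (q = p + (d + 1) ∧ 0 ≤ q) ∨
      (p = q + (d + 1) ∧ 0 ≤ p) ∨ (p + q = -((d : ℤ) + 1) ∧ p < 0 ∧ q < 0) := by
    simp only [Strip]; push_cast; omega
  by_cases c : Strip d (p, q)
  · have c' := c
    simp only [Strip] at c'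
    rw [if_pos c, if_pos (hs.2 (Or.inl c)), if_neg (by omega), if_neg (by omega),
      if_neg (by omega)]; ring
  rw [if_neg c]
  by_cases c1 : q = p + (d + 1) ∧ 0 ≤ q
  · rw [if_pos c1, if_pos (hs.2 (by tauto)), if_neg (by omega), if_neg (by omega)]; ring
  rw [if_neg c1]
  by_cases c2 : p = q + (d + 1) ∧ 0 ≤ p
  · rw [if_pos c2, if_pos (hs.2 (by tauto)), if_neg (by omega)]; ring
  rw [if_neg c2]
  by_cases c3 : p + q = -((d : ℤ) + 1) ∧ p < 0 ∧ q < 0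
  · rw [if_pos c3, if_pos (hs.2 (by tauto))]; ring
  · rw [if_neg c3, if_neg (by rw [hs]; tauto)]; ring

/-- The partial sums of `ζ(2)`. -/
noncomputable def harmTwo (n : ℕ) : ℝ := ∑ k ∈ Finset.range n, (((k : ℝ) + 1) ^ 2)⁻¹

theorem hasSum_strip_inv (d : ℕ) :
    HasSum (fun x : ℤ × ℤ => if Strip d x then (x.1 : ℝ)⁻¹ * (x.2 : ℝ)⁻¹ else 0)
      (zetaTwo + 2 * harmTwo d) := by
  induction d with
  | zero =>
    simpa [harmTwo] using hasSum_strip_zero (fun x y => x⁻¹ * y⁻¹) (by simp) (by simp)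
  | succ d ih =>
    have hl := hasSum_line (-1) d (fun x y => x⁻¹ * y⁻¹) (by simp) (by simp) (by simp)
      (by intros; simp [inv_neg])
    convert hasSum_strip_succ d (fun x y => x⁻¹ * y⁻¹) (by simp) (by simp) ih hl
      (fun x y => mul_comm _ _) using 1
    have e : ∑ s ∈ Finset.range d, (-((s : ℝ) + 1))⁻¹ * (-((d : ℝ) - s))⁻¹ =
        2 * harm d * ((d : ℝ) + 1)⁻¹ := by
      rw [← sum_inv_mul_inv_reflect]
      refine Finset.sum_congr rfl fun s _ => ?_
      rw [inv_neg, inv_neg]; ring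
    rw [e, harm_succ, harmTwo, Finset.sum_range_succ, ← harmTwo]
    rw [sq, mul_inv]
    ring

theorem hasSum_strip_abs_inv (d : ℕ) :
    ∃ A : ℝ, A ≤ zetaTwo + 32 * Real.sqrt d ∧
    HasSum (fun x : ℤ × ℤ => if Strip d x then |(x.1 : ℝ)⁻¹ * (x.2 : ℝ)⁻¹| else 0) A := by
  induction d with
  | zero =>
    refine ⟨zetaTwo, by simp, hasSum_strip_zero (fun x y => |x⁻¹ * y⁻¹|) (by simp) ?_⟩
    intro x y hx hy
    exact abs_of_pos (by positivity)
  | succ d ih =>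
    obtain ⟨A, hA, ih⟩ := ih
    have hl := hasSum_line 1 d (fun x y => |x⁻¹ * y⁻¹|) (by simp) (by simp)
      (fun x y hx hy => abs_of_pos (by positivity))
      (fun x y hx hy => by
        simp only [inv_neg, neg_mul, abs_neg, one_mul]
        exact abs_of_pos (by positivity))
    refine ⟨_, ?_, hasSum_strip_succ d (fun x y => |x⁻¹ * y⁻¹|) (by simp) (by simp) ih hl
      (fun x y => by rw [mul_comm])⟩
    have e : ∑ s ∈ Finset.range d, |(-((s : ℝ) + 1))⁻¹ * (-((d : ℝ) - s))⁻¹| =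
        2 * harm d * ((d : ℝ) + 1)⁻¹ := by
      rw [← sum_inv_mul_inv_reflect]
      refine Finset.sum_congr rfl fun s hs => ?_
      have hs : (s : ℝ) < d := by exact_mod_cast Finset.mem_range.1 hs
      have : 0 < (d : ℝ) - s := by linarith
      rw [inv_neg, inv_neg, neg_mul_neg]
      exact abs_of_pos (by positivity)
    rw [e]
    have b1 := harm_succ_div_le d
    have b2 := inv_sqrt_succ_le d
    have b3 : harm d * ((d : ℝ) + 1)⁻¹ ≤ harm (d + 1) * ((d : ℝ) + 1)⁻¹ := by
      rw [harm_succ]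
      gcongr
      simp; positivity
    push_cast
    linarith

/-- The strip sums in terms of the sides of the triangles. -/
theorem hasSum_tri_of_strip {u : ℝ → ℝ → ℝ} {S : ℝ} (i : ℕ)
    (h : HasSum (fun x : ℤ × ℤ => if Strip i x then u x.1 x.2 else 0) S) :
    HasSum (fun x : ℕ × ℕ => if Tri i x.1 x.2 then u ((x.1 : ℝ) - i) ((x.2 : ℝ) - i) else 0) S := by
  let φ : ℕ × ℕ → ℤ × ℤ := fun x => ((x.1 : ℤ) - i, (x.2 : ℤ) - i)
  have hφ : Function.Injective φ := fun a b h => by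
    simp only [φ, Prod.mk.injEq] at h
    ext <;> omega
  rw [← hφ.hasSum_iff] at h
  · convert h using 2 with x
    simp only [Function.comp, φ]
    push_cast
    refine if_congr ?_ rfl rfl
    simp only [Tri, Strip]
    omega
  · intro x hx
    refine if_neg fun h => hx ⟨((x.1 + i).toNat, (x.2 + i).toNat), ?_⟩
    simp only [Strip] at h
    ext <;> simp only [φ] <;> omega

theorem tendsto_cube_of_hasSum {F : ℕ × ℕ × ℕ → ℝ} {S : ℝ} (h : HasSum F S) :
    Tendsto (fun N => cube N fun i j k => F (i, j, k)) atTop (nhds S) := by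
  let B : ℕ → Finset (ℕ × ℕ × ℕ) := fun N =>
    Finset.range (N + 1) ×ˢ Finset.range (N + 1) ×ˢ Finset.range (N + 1)
  have hB : Tendsto B atTop atTop := by
    refine tendsto_atTop_finset_of_monotone (fun m n hmn x hx => ?_) (fun x => ?_)
    · simp only [B, Finset.mem_product, Finset.mem_range] at hx ⊢
      omega
    · refine ⟨x.1 + x.2.1 + x.2.2, ?_⟩
      simp only [B, Finset.mem_product, Finset.mem_range]
      omega
  refine (h.comp hB).congr fun N => ?_
  simp only [Function.comp, B, cube, Finset.sum_product]

/-- Contribution of the pole of `wt τ i * wt τ j * wt τ k` attached to the index `i`. -/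
noncomputable def pole (τ : ℝ) (i j k : ℕ) : ℝ :=
  wt τ i * (((j : ℝ) - i)⁻¹ * ((k : ℝ) - i)⁻¹) +
    if j = i then wt τ i ^ 2 * ((k : ℝ) - i)⁻¹ - wt τ i * (((k : ℝ) - i) ^ 2)⁻¹ else 0

theorem wt_mul_wt_mul_wt {τ : ℝ} (hτ : 0 < τ) (i j k : ℕ) :
    wt τ i * wt τ j * wt τ k = pole τ i j k + pole τ j k i + pole τ k i j +
      if i = j ∧ j = k then wt τ i ^ 3 else 0 := by
  have hi : (i : ℝ) + τ ≠ 0 := by positivity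
  have hj : (j : ℝ) + τ ≠ 0 := by positivity
  have hk : (k : ℝ) + τ ≠ 0 := by positivity
  have two : ∀ i k : ℕ, i ≠ k → wt τ i * wt τ i * wt τ k =
      pole τ i i k + pole τ i k i + pole τ k i i := by
    intro i k h
    have hi : (i : ℝ) + τ ≠ 0 := by positivity
    have hk : (k : ℝ) + τ ≠ 0 := by positivity
    have d : (k : ℝ) - i ≠ 0 := sub_ne_zero.2 (by exact_mod_cast h.symm)
    have d' : (i : ℝ) - k ≠ 0 := sub_ne_zero.2 (by exact_mod_cast h)
    simp only [pole, wt, if_neg h, if_neg h.symm, if_true, sub_self, inv_zero]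
    rw [show (i : ℝ) - k = -(k - i) by ring]
    field_simp
    ring
  by_cases h1 : i = j
  · subst h1
    by_cases h2 : i = k
    · subst h2
      simp [pole]
      ring
    · rw [two i k h2, if_neg (by tauto)]; ring
  by_cases h2 : j = k
  · subst h2
    rw [show wt τ i * wt τ j * wt τ j = wt τ j * wt τ j * wt τ i by ring, two j i (Ne.symm h1),
      if_neg (by tauto)]
    ring
  by_cases h3 : i = k
  · subst h3
    rw [show wt τ i * wt τ j * wt τ i = wt τ i * wt τ i * wt τ j by ring, two i j h1,
      if_neg (by tauto)]
    ring
  · have d1 : (j : ℝ) - i ≠ 0 := sub_ne_zero.2 (by exact_mod_cast Ne.symm h1)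
    have d2 : (k : ℝ) - j ≠ 0 := sub_ne_zero.2 (by exact_mod_cast Ne.symm h2)
    have d3 : (k : ℝ) - i ≠ 0 := sub_ne_zero.2 (by exact_mod_cast Ne.symm h3)
    simp only [pole, wt, if_neg (Ne.symm h1), if_neg (Ne.symm h2), if_neg h3]
    rw [if_neg (by tauto), show (i : ℝ) - j = -(j - i) by ring,
      show (i : ℝ) - k = -(k - i) by ring, show (j : ℝ) - k = -(k - j) by ring]
    rw [inv_neg, inv_neg, inv_neg]
    field_simp
    ring

/-- Difference of the weights at `τ` and at `1`. -/
noncomputable def dwt (τ : ℝ) (i : ℕ) : ℝ := wt τ i - wt 1 i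

theorem wt_le {τ : ℝ} (hτ : 0 < τ) (h1 : τ ≤ 1) (i : ℕ) : wt τ i ≤ τ⁻¹ * ((i : ℝ) + 1)⁻¹ := by
  rw [wt, ← mul_inv]
  apply inv_anti₀ (by positivity)
  nlinarith [(Nat.cast_nonneg i : (0 : ℝ) ≤ i)]

theorem dwt_nonneg {τ : ℝ} (hτ : 0 < τ) (h1 : τ ≤ 1) (i : ℕ) : 0 ≤ dwt τ i := by
  rw [dwt, sub_nonneg, wt, wt]
  apply inv_anti₀ (by positivity)
  linarith

theorem dwt_le {τ : ℝ} (hτ : 0 < τ) (h1 : τ ≤ 1) (i : ℕ) :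
    dwt τ i ≤ τ⁻¹ * (((i : ℝ) + 1) ^ 2)⁻¹ := by
  have e : dwt τ i = (1 - τ) * wt τ i * ((i : ℝ) + 1)⁻¹ := by
    have hi : (i : ℝ) + τ ≠ 0 := by positivity
    rw [dwt, wt, wt]
    field_simp
    ring
  have h2 := wt_le hτ h1 i
  have h3 := wt_nonneg hτ i
  calc dwt τ i = (1 - τ) * wt τ i * ((i : ℝ) + 1)⁻¹ := e
    _ ≤ 1 * (τ⁻¹ * ((i : ℝ) + 1)⁻¹) * ((i : ℝ) + 1)⁻¹ := by
        gcongr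
        linarith
    _ = τ⁻¹ * (((i : ℝ) + 1) ^ 2)⁻¹ := by rw [sq, mul_inv]; ring

theorem summable_dwt_mul_sqrt {τ : ℝ} (hτ : 0 < τ) (h1 : τ ≤ 1) :
    Summable fun i : ℕ => dwt τ i * Real.sqrt ((i : ℝ) + 1) := by
  have hs : Summable fun i : ℕ => τ⁻¹ * ((((i + 1 : ℕ) : ℝ) ^ (3 / 2 : ℝ))⁻¹) := by
    refine Summable.mul_left _ ?_
    exact (summable_nat_add_iff 1 (f := fun n : ℕ => ((n : ℝ) ^ (3 / 2 : ℝ))⁻¹)).2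
      (Real.summable_nat_rpow_inv.2 (by norm_num))
  refine Summable.of_nonneg_of_le
    (fun i => mul_nonneg (dwt_nonneg hτ h1 i) (Real.sqrt_nonneg _)) (fun i => ?_) hs
  have hp : (0 : ℝ) < (i : ℝ) + 1 := by positivity
  have e : (((i : ℝ) + 1) ^ 2)⁻¹ * Real.sqrt ((i : ℝ) + 1) = (((i : ℝ) + 1) ^ (3 / 2 : ℝ))⁻¹ := by
    rw [Real.sqrt_eq_rpow, ← Real.rpow_natCast, ← Real.rpow_neg hp.le, ← Real.rpow_neg hp.le,
      ← Real.rpow_add hp]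
    norm_num
  push_cast
  rw [← e, ← mul_assoc]
  gcongr
  exact dwt_le hτ h1 i

theorem summable_dwt {τ : ℝ} (hτ : 0 < τ) (h1 : τ ≤ 1) : Summable (dwt τ) := by
  refine Summable.of_nonneg_of_le (dwt_nonneg hτ h1) (fun i => ?_) (summable_dwt_mul_sqrt hτ h1)
  refine le_mul_of_one_le_right (dwt_nonneg hτ h1 i) ?_
  rw [Real.one_le_sqrt]
  simp

theorem hasSum_diag (i : ℕ) (v : ℕ → ℝ) :
    HasSum (fun x : ℕ × ℕ => if Tri i x.1 x.2 then (if x.1 = i then v x.2 else 0) else 0)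
      (∑ k ∈ Finset.range (2 * i + 1), v k) := by
  have hφ : Function.Injective (fun k : ℕ => (i, k)) := fun a b h => by simpa using h
  rw [← hφ.hasSum_iff]
  · have : ∑ k ∈ Finset.range (2 * i + 1), v k = ∑ k ∈ Finset.range (2 * i + 1),
        ((fun x : ℕ × ℕ => if Tri i x.1 x.2 then (if x.1 = i then v x.2 else 0) else 0) ∘
          fun k : ℕ => (i, k)) k := by
      refine Finset.sum_congr rfl fun k hk => ?_
      have hk := Finset.mem_range.1 hk
      have : Tri i i k := by unfold Tri; omega
      simp [this]
    rw [this]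
    refine hasSum_sum_of_ne_finset_zero fun k hk => ?_
    have hk := Finset.mem_range.not.1 hk
    have : ¬ Tri i i k := by unfold Tri; omega
    simp [this]
  · intro x hx
    have : x.1 ≠ i := fun h => hx ⟨x.2, by ext <;> simp [h]⟩
    simp [this]

theorem sum_inv_sub_symm (i : ℕ) :
    ∑ k ∈ Finset.range (2 * i + 1), ((k : ℝ) - i)⁻¹ = 0 := by
  have h := Finset.sum_range_reflect (fun k : ℕ => ((k : ℝ) - i)⁻¹) (2 * i + 1)
  have h2 : ∑ k ∈ Finset.range (2 * i + 1), (((2 * i + 1 - 1 - k : ℕ) : ℝ) - i)⁻¹ =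
      - ∑ k ∈ Finset.range (2 * i + 1), ((k : ℝ) - i)⁻¹ := by
    rw [← Finset.sum_neg_distrib]
    refine Finset.sum_congr rfl fun k hk => ?_
    have hk := Finset.mem_range.1 hk
    rw [show 2 * i + 1 - 1 - k = 2 * i - k by omega, Nat.cast_sub (by omega), ← inv_neg]
    push_cast
    ring
  rw [h2] at h
  linarith

theorem sum_inv_sub_sq (i : ℕ) :
    ∑ k ∈ Finset.range (2 * i + 1), (((k : ℝ) - i) ^ 2)⁻¹ = 2 * harmTwo i := by
  rw [show 2 * i + 1 = i + (i + 1) by ring, Finset.sum_range_add, Finset.sum_range_succ',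
    ← Finset.sum_range_reflect]
  have h1 : ∑ k ∈ Finset.range i, ((((i - 1 - k : ℕ) : ℝ) - i) ^ 2)⁻¹ = harmTwo i := by
    refine Finset.sum_congr rfl fun k hk => ?_
    have hk := Finset.mem_range.1 hk
    rw [show i - 1 - k = i - (k + 1) by omega, Nat.cast_sub (by omega)]
    push_cast
    ring
  have h2 : ∑ k ∈ Finset.range i, ((((i + (k + 1) : ℕ) : ℝ) - i) ^ 2)⁻¹ = harmTwo i := by
    refine Finset.sum_congr rfl fun k hk => ?_
    push_cast
    ring
  rw [h1, h2]
  simp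
  ring

theorem harmTwo_le (n : ℕ) : harmTwo n ≤ zetaTwo :=
  hasSum_zetaTwo.summable.sum_le_tsum _ fun _ _ => by positivity

/-- The poles at `i`, summed over all triangles with side `i`. -/
theorem hasSum_dpole (τ : ℝ) (i : ℕ) :
    HasSum (fun x : ℕ × ℕ => if Tri i x.1 x.2 then pole τ i x.1 x.2 - pole 1 i x.1 x.2 else 0)
      (dwt τ i * zetaTwo) := by
  have h1 := (hasSum_tri_of_strip (u := fun x y => x⁻¹ * y⁻¹) i (hasSum_strip_inv i)).mul_left
    (dwt τ i)
  have h2 := hasSum_diag i (fun k => (wt τ i ^ 2 - wt 1 i ^ 2) * ((k : ℝ) - i)⁻¹ -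
    dwt τ i * (((k : ℝ) - i) ^ 2)⁻¹)
  rw [Finset.sum_sub_distrib, ← Finset.mul_sum, ← Finset.mul_sum, sum_inv_sub_symm,
    sum_inv_sub_sq] at h2
  have h3 := h1.add h2
  rw [show dwt τ i * (zetaTwo + 2 * harmTwo i) +
    ((wt τ i ^ 2 - wt 1 i ^ 2) * 0 - dwt τ i * (2 * harmTwo i)) = dwt τ i * zetaTwo by ring] at h3
  refine h3.congr_fun fun x => ?_
  simp only [pole, dwt]
  split_ifs <;> ring

theorem summable_dpole {τ : ℝ} (hτ : 0 < τ) (hτ1 : τ ≤ 1) :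
    Summable (fun x : ℕ × ℕ × ℕ => if Tri x.1 x.2.1 x.2.2 then
      pole τ x.1 x.2.1 x.2.2 - pole 1 x.1 x.2.1 x.2.2 else 0) := by
  choose A hA hA' using hasSum_strip_abs_inv
  let B : ℕ × ℕ × ℕ → ℝ := fun x =>
    dwt τ x.1 * (if Tri x.1 x.2.1 x.2.2 then
      |((x.2.1 : ℝ) - x.1)⁻¹ * ((x.2.2 : ℝ) - x.1)⁻¹| else 0) +
    if Tri x.1 x.2.1 x.2.2 then (if x.2.1 = x.1 then
      (wt τ x.1 ^ 2 - wt 1 x.1 ^ 2) + dwt τ x.1 * (((x.2.2 : ℝ) - x.1) ^ 2)⁻¹ else 0) else 0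
  have d0 := dwt_nonneg hτ hτ1
  have hw2 : ∀ i, wt τ i ^ 2 - wt 1 i ^ 2 = dwt τ i * (wt τ i + wt 1 i) := fun i => by
    unfold dwt; ring
  have hw0 : ∀ i, 0 ≤ wt τ i ^ 2 - wt 1 i ^ 2 := fun i => by
    rw [hw2]
    exact mul_nonneg (d0 i) (add_nonneg (wt_nonneg hτ i) (wt_nonneg one_pos i))
  have hB0 : ∀ x, 0 ≤ B x := fun x => by
    have := d0 x.1
    have := hw0 x.1
    simp only [B]
    split_ifs <;> positivity
  have hBsum : ∀ i, HasSum (fun y => B (i, y)) (dwt τ i * A i +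
      ((2 * i + 1) * (wt τ i ^ 2 - wt 1 i ^ 2) + dwt τ i * (2 * harmTwo i))) := by
    intro i
    have h1 := (hasSum_tri_of_strip (u := fun x y => |x⁻¹ * y⁻¹|) i (hA' i)).mul_left (dwt τ i)
    have h2 := hasSum_diag i (fun k => (wt τ i ^ 2 - wt 1 i ^ 2) +
      dwt τ i * (((k : ℝ) - i) ^ 2)⁻¹)
    rw [Finset.sum_add_distrib, ← Finset.mul_sum, sum_inv_sub_sq, Finset.sum_const,
      Finset.card_range, nsmul_eq_mul] at h2
    push_cast at h2
    exact h1.add h2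
  have hBs : Summable B := by
    rw [summable_prod_of_nonneg hB0]
    refine ⟨fun i => (hBsum i).summable, ?_⟩
    simp only [fun i => (hBsum i).tsum_eq]
    have hz : 0 ≤ zetaTwo := hasSum_zetaTwo.nonneg fun _ => by positivity
    refine Summable.of_nonneg_of_le (fun i => (hBsum i).nonneg fun y => hB0 _) (fun i => ?_)
      ((summable_dwt_mul_sqrt hτ hτ1).mul_left (3 * zetaTwo + 32 + 2 * (τ⁻¹ + 1)))
    have s1 : Real.sqrt i ≤ Real.sqrt ((i : ℝ) + 1) := Real.sqrt_le_sqrt (by linarith)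
    have s2 : 1 ≤ Real.sqrt ((i : ℝ) + 1) := by rw [Real.one_le_sqrt]; simp
    have a1 : A i ≤ (zetaTwo + 32) * Real.sqrt ((i : ℝ) + 1) := by
      nlinarith [hA i]
    have a2 : harmTwo i ≤ zetaTwo * Real.sqrt ((i : ℝ) + 1) := by
      nlinarith [harmTwo_le i]
    have a3 : (2 * i + 1) * (wt τ i + wt 1 i) ≤ 2 * (τ⁻¹ + 1) * Real.sqrt ((i : ℝ) + 1) := by
      have b1 := wt_le hτ hτ1 i
      have b2 : wt 1 i = ((i : ℝ) + 1)⁻¹ := rfl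
      have b3 : ((i : ℝ) + 1) * ((i : ℝ) + 1)⁻¹ = 1 := mul_inv_cancel₀ (by positivity)
      have b4 : 0 ≤ τ⁻¹ := by positivity
      calc (2 * i + 1) * (wt τ i + wt 1 i)
          ≤ (2 * ((i : ℝ) + 1)) * (τ⁻¹ * ((i : ℝ) + 1)⁻¹ + ((i : ℝ) + 1)⁻¹) := by
            have b5 := wt_nonneg hτ i
            have b6 : 0 ≤ ((i : ℝ) + 1)⁻¹ := by positivity
            rw [b2]
            gcongr
            all_goals linarith
        _ = 2 * (τ⁻¹ + 1) * (((i : ℝ) + 1) * ((i : ℝ) + 1)⁻¹) := by ring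
        _ ≤ 2 * (τ⁻¹ + 1) * Real.sqrt ((i : ℝ) + 1) := by rw [b3]; gcongr
    rw [hw2]
    calc dwt τ i * A i + ((2 * i + 1) * (dwt τ i * (wt τ i + wt 1 i)) +
          dwt τ i * (2 * harmTwo i))
        = dwt τ i * (A i + (2 * i + 1) * (wt τ i + wt 1 i) + 2 * harmTwo i) := by ring
      _ ≤ dwt τ i * ((zetaTwo + 32) * Real.sqrt ((i : ℝ) + 1) +
          2 * (τ⁻¹ + 1) * Real.sqrt ((i : ℝ) + 1) +
          2 * (zetaTwo * Real.sqrt ((i : ℝ) + 1))) := by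
          have := d0 i
          gcongr
      _ = _ := by ring
  refine Summable.of_norm_bounded hBs fun x => ?_
  obtain ⟨i, j, k⟩ := x
  have e : pole τ i j k - pole 1 i j k = dwt τ i * (((j : ℝ) - i)⁻¹ * ((k : ℝ) - i)⁻¹) +
      if j = i then (wt τ i ^ 2 - wt 1 i ^ 2) * ((k : ℝ) - i)⁻¹ -
        dwt τ i * (((k : ℝ) - i) ^ 2)⁻¹ else 0 := by
    simp only [pole, dwt]
    split_ifs <;> ring
  simp only [B, e]
  have hk : |((k : ℝ) - i)⁻¹| ≤ 1 := by
    by_cases h : k = i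
    · simp [h]
    · rw [abs_inv]
      apply inv_le_one_of_one_le₀
      have : (1 : ℤ) ≤ |(k : ℤ) - i| := Int.one_le_abs (by omega)
      exact_mod_cast this
  by_cases c : Tri i j k
  · simp only [if_pos c]
    refine (norm_add_le _ _).trans (add_le_add ?_ ?_)
    · rw [Real.norm_eq_abs, abs_mul, abs_of_nonneg (d0 i)]
    · split_ifs
      · refine (norm_sub_le _ _).trans (add_le_add ?_ ?_)
        · rw [Real.norm_eq_abs, abs_mul, abs_of_nonneg (hw0 i)]
          exact mul_le_of_le_one_right (hw0 i) hk
        · rw [Real.norm_eq_abs, abs_of_nonneg]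
          have := d0 i
          positivity
      · simp
  · simp [if_neg c]

theorem tri_comm (i j k : ℕ) : Tri j k i ↔ Tri i j k := by unfold Tri; omega

/-- The triangle sums at `τ` and `1` differ, in the limit, by cubes and a multiple of `ζ(2)`. -/
theorem tendsto_cube_tri {τ : ℝ} (hτ : 0 < τ) (hτ1 : τ ≤ 1) :
    Tendsto (fun N => cube N (fun i j k => if Tri i j k then wt τ i * wt τ j * wt τ k else 0)
      - cube N (fun i j k => if Tri i j k then wt 1 i * wt 1 j * wt 1 k else 0)
      - ∑ i ∈ Finset.range (N + 1), (wt τ i ^ 3 - wt 1 i ^ 3)) atTop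
      (nhds (3 * ((∑' i, dwt τ i) * zetaTwo))) := by
  have hs := summable_dpole hτ hτ1
  have hsum : HasSum (fun x : ℕ × ℕ × ℕ => if Tri x.1 x.2.1 x.2.2 then
      pole τ x.1 x.2.1 x.2.2 - pole 1 x.1 x.2.1 x.2.2 else 0) ((∑' i, dwt τ i) * zetaTwo) := by
    have := hs.hasSum.prod_fiberwise (fun i => hasSum_dpole τ i)
    rw [((summable_dwt hτ hτ1).hasSum.mul_right zetaTwo).unique this]
    exact hs.hasSum
  refine ((tendsto_cube_of_hasSum hsum).const_mul 3).congr fun N => ?_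
  let g : ℕ → ℕ → ℕ → ℝ := fun i j k => if Tri i j k then pole τ i j k - pole 1 i j k else 0
  have r1 : cube N (fun i j k => g j k i) = cube N g := cube_rotate N g
  have r2 : cube N (fun i j k => g k i j) = cube N g :=
    (cube_rotate N (fun i j k => g k i j)).symm
  have hdiag : ∑ i ∈ Finset.range (N + 1), (wt τ i ^ 3 - wt 1 i ^ 3) =
      cube N (fun i j k => if i = j ∧ j = k then wt τ i ^ 3 - wt 1 i ^ 3 else 0) := by
    unfold cube
    refine Finset.sum_congr rfl fun i hi => ?_
    rw [Finset.sum_eq_single_of_mem i hi, Finset.sum_eq_single_of_mem i hi]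
    · simp
    · intro k _ hk
      exact if_neg (by tauto)
    · intro j _ hj
      exact Finset.sum_eq_zero fun k _ => if_neg (by tauto)
  have : cube N (fun i j k => if Tri i j k then wt τ i * wt τ j * wt τ k else 0)
      - cube N (fun i j k => if Tri i j k then wt 1 i * wt 1 j * wt 1 k else 0) =
      cube N g + cube N (fun i j k => g j k i) + cube N (fun i j k => g k i j) +
      cube N (fun i j k => if i = j ∧ j = k then wt τ i ^ 3 - wt 1 i ^ 3 else 0) := by
    rw [← cube_sub, ← cube_add, ← cube_add, ← cube_add]
    congr 1
    funext i j k
    simp only [g, tri_comm i j k, (tri_comm k i j).symm]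
    by_cases c : Tri i j k
    · simp only [if_pos c]
      rw [wt_mul_wt_mul_wt hτ, wt_mul_wt_mul_wt one_pos]
      split_ifs <;> ring
    · have : ¬ (i = j ∧ j = k) := by
        rintro ⟨rfl, rfl⟩
        exact c (by unfold Tri; omega)
      simp [if_neg c, if_neg this]
  rw [this, hdiag, r1, r2]
  simp only [g]
  ring

/-- The sum of `wt 1 j * wt 1 k` over `j + k = b`. -/
noncomputable def pairSum (b : ℕ) : ℝ := 2 * ((b : ℝ) + 2)⁻¹ * harm (b + 1)

theorem pairSum_nonneg (b : ℕ) : 0 ≤ pairSum b :=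
  mul_nonneg (by positivity) (harm_nonneg _)

theorem pairSum_le (b : ℕ) :
    pairSum b ≤ 8 * (Real.sqrt ((b + 1 : ℕ) : ℝ) - Real.sqrt b) := by
  have h1 := inv_sqrt_succ_le b
  have h2 := harm_succ_div_le b
  have h3 : ((b : ℝ) + 2)⁻¹ ≤ ((b : ℝ) + 1)⁻¹ := inv_anti₀ (by positivity) (by linarith)
  have h4 := mul_le_mul_of_nonneg_left h3 (harm_nonneg (b + 1))
  push_cast
  unfold pairSum
  linarith

theorem sq_harm (N : ℕ) :
    harm (N + 1) ^ 2 = harmTwo (N + 1) + ∑ b ∈ Finset.range N, pairSum b := by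
  induction N with
  | zero => simp [harm, harmTwo]
  | succ N ih =>
    have h : harmTwo (N + 1 + 1) = harmTwo (N + 1) + ((((N + 1 : ℕ) : ℝ) + 1) ^ 2)⁻¹ :=
      Finset.sum_range_succ _ _
    rw [Finset.sum_range_succ, harm_succ, add_sq, ih, h, pairSum, ← inv_pow]
    push_cast
    ring

theorem sum_pair_lt_wt_one {n M : ℕ} (h : M ≤ n) :
    (∑ j ∈ Finset.range n, ∑ k ∈ Finset.range n, if j + k < M then wt 1 j * wt 1 k else 0) =
      ∑ b ∈ Finset.range M, pairSum b := by
  have : ∀ b ∈ Finset.range M, pairSum b =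
      ∑ j ∈ Finset.range n, ∑ k ∈ Finset.range n, if j + k = b then wt 1 j * wt 1 k else 0 := by
    intro b hb
    rw [sum_pair_wt one_pos ((Finset.mem_range.1 hb).trans_le h), mul_one]
    rfl
  rw [Finset.sum_congr rfl this]
  symm
  rw [Finset.sum_comm]
  refine Finset.sum_congr rfl fun j _ => ?_
  rw [Finset.sum_comm]
  exact Finset.sum_congr rfl fun k _ => sum_ite_eq_lt _ _ _

/-- Sum of `wt 1 j * wt 1 k` over the part of the square beyond the antidiagonal `N - i`. -/
noncomputable def corner (N i : ℕ) : ℝ :=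
  ∑ j ∈ Finset.range (N + 1), ∑ k ∈ Finset.range (N + 1),
    if N ≤ i + j + k then wt 1 j * wt 1 k else 0

theorem corner_eq {N i : ℕ} (h : i ≤ N) :
    corner N i = harmTwo (N + 1) + ∑ b ∈ Finset.Ico (N - i) N, pairSum b := by
  have h1 : corner N i + (∑ j ∈ Finset.range (N + 1), ∑ k ∈ Finset.range (N + 1),
      if j + k < N - i then wt 1 j * wt 1 k else 0) = harm (N + 1) ^ 2 := by
    rw [sq, harm, Finset.sum_mul_sum, corner, ← Finset.sum_add_distrib]
    refine Finset.sum_congr rfl fun j _ => ?_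
    rw [← Finset.sum_add_distrib]
    refine Finset.sum_congr rfl fun k _ => ?_
    by_cases c : N ≤ i + j + k
    · rw [if_pos c, if_neg (by omega), add_zero]; rfl
    · rw [if_neg c, if_pos (by omega), zero_add]; rfl
  rw [sum_pair_lt_wt_one (by omega), sq_harm] at h1
  rw [Finset.sum_Ico_eq_sub _ (by omega)]
  linarith

/-- Length `√N - √(N - s)` controlling sums of `1 / √k` over `N - s < k ≤ N`. -/
noncomputable def sqrtGap (N s : ℕ) : ℝ := Real.sqrt N - Real.sqrt ((N - s : ℕ) : ℝ)

theorem sum_Ico_sqrt_sub (N s : ℕ) :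
    ∑ b ∈ Finset.Ico (N - s) N, (Real.sqrt ((b + 1 : ℕ) : ℝ) - Real.sqrt b) = sqrtGap N s := by
  rw [Finset.sum_Ico_eq_sub _ (by omega), Finset.sum_range_sub (fun b : ℕ => Real.sqrt (b : ℝ)),
    Finset.sum_range_sub (fun b : ℕ => Real.sqrt (b : ℝ)), sqrtGap]
  ring

theorem sqrtGap_nonneg (N s : ℕ) : 0 ≤ sqrtGap N s :=
  sub_nonneg.2 (Real.sqrt_le_sqrt (by exact_mod_cast Nat.sub_le N s))

theorem sqrtGap_le (N s : ℕ) : sqrtGap N s ≤ Real.sqrt s := by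
  have h : (N : ℝ) ≤ (N - s : ℕ) + s := by exact_mod_cast (by omega : N ≤ N - s + s)
  have h1 := Real.sq_sqrt (Nat.cast_nonneg (α := ℝ) (N - s))
  have h2 := Real.sq_sqrt (Nat.cast_nonneg (α := ℝ) s)
  have h3 := Real.sqrt_nonneg ((N - s : ℕ) : ℝ)
  have h4 := Real.sqrt_nonneg (s : ℝ)
  rw [sqrtGap, sub_le_iff_le_add, Real.sqrt_le_iff]
  constructor
  · positivity
  · nlinarith

theorem tendsto_sqrtGap (s : ℕ) : Tendsto (fun N => sqrtGap N s) atTop (nhds 0) := by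
  have h0 : Tendsto (fun N : ℕ => (s : ℝ) / Real.sqrt N) atTop (nhds 0) :=
    (Real.tendsto_sqrt_atTop.comp tendsto_natCast_atTop_atTop).const_div_atTop _
  refine squeeze_zero' (Eventually.of_forall fun N => sqrtGap_nonneg N s) ?_ h0
  filter_upwards [eventually_gt_atTop 0] with N hN
  have h : (N : ℝ) ≤ (N - s : ℕ) + s := by exact_mod_cast (by omega : N ≤ N - s + s)
  have hp : 0 < Real.sqrt (N : ℝ) := Real.sqrt_pos.2 (by exact_mod_cast hN)
  have h1 := Real.sq_sqrt (Nat.cast_nonneg (α := ℝ) (N - s))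
  have h2 := Real.sq_sqrt (Nat.cast_nonneg (α := ℝ) N)
  have h3 := Real.sqrt_nonneg ((N - s : ℕ) : ℝ)
  have h4 := sqrtGap_nonneg N s
  rw [le_div_iff₀ hp]
  unfold sqrtGap at h4 ⊢
  nlinarith

theorem corner_nonneg (N i : ℕ) : 0 ≤ corner N i :=
  Finset.sum_nonneg fun j _ => Finset.sum_nonneg fun k _ => by
    have := wt_nonneg one_pos j
    have := wt_nonneg one_pos k
    split_ifs <;> positivity

theorem harmTwo_le_corner {N i : ℕ} (h : i ≤ N) : harmTwo (N + 1) ≤ corner N i := by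
  rw [corner_eq h]
  have := Finset.sum_nonneg fun b (_ : b ∈ Finset.Ico (N - i) N) => pairSum_nonneg b
  linarith

theorem corner_le {N i : ℕ} (h : i ≤ N) : corner N i ≤ harmTwo (N + 1) + 8 * sqrtGap N i := by
  rw [corner_eq h, ← sum_Ico_sqrt_sub, Finset.mul_sum]
  gcongr with b hb
  exact pairSum_le b

theorem tendsto_harmTwo : Tendsto harmTwo atTop (nhds zetaTwo) :=
  hasSum_zetaTwo.tendsto_sum_nat

theorem tendsto_corner (i : ℕ) : Tendsto (fun N => corner N i) atTop (nhds zetaTwo) := by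
  have h1 := (tendsto_add_atTop_iff_nat 1).2 tendsto_harmTwo
  have h2 := h1.add ((tendsto_sqrtGap i).const_mul 8)
  rw [mul_zero, add_zero] at h2
  refine tendsto_of_tendsto_of_tendsto_of_le_of_le' h1 h2 ?_ ?_
  · filter_upwards [eventually_ge_atTop i] with N hN using harmTwo_le_corner hN
  · filter_upwards [eventually_ge_atTop i] with N hN using corner_le hN

theorem tsum_ite_lt (n : ℕ) (f : ℕ → ℝ) :
    ∑' i, (if i < n then f i else 0) = ∑ i ∈ Finset.range n, f i := by
  rw [tsum_eq_sum (s := Finset.range n) fun i hi => if_neg (Finset.mem_range.not.1 hi)]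
  exact Finset.sum_congr rfl fun i hi => if_pos (Finset.mem_range.1 hi)

theorem tsum_prod_ite_lt (n : ℕ) (f : ℕ → ℕ → ℝ) :
    ∑' x : ℕ × ℕ, (if x.1 < n ∧ x.2 < n then f x.1 x.2 else 0) =
      ∑ i ∈ Finset.range n, ∑ j ∈ Finset.range n, f i j := by
  rw [tsum_eq_sum (s := Finset.range n ×ˢ Finset.range n) fun x hx => if_neg (by simpa using hx),
    Finset.sum_product]
  refine Finset.sum_congr rfl fun i hi => Finset.sum_congr rfl fun j hj => if_pos ?_
  exact ⟨Finset.mem_range.1 hi, Finset.mem_range.1 hj⟩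

theorem zetaTwo_nonneg : 0 ≤ zetaTwo := hasSum_zetaTwo.nonneg fun _ => by positivity

theorem tendsto_sum_dwt_mul_corner {τ : ℝ} (hτ : 0 < τ) (hτ1 : τ ≤ 1) :
    Tendsto (fun N => ∑ i ∈ Finset.range (N + 1), dwt τ i * corner N i) atTop
      (nhds ((∑' i, dwt τ i) * zetaTwo)) := by
  simp only [← tsum_ite_lt, ← tsum_mul_right]
  refine tendsto_tsum_of_dominated_convergence
    ((summable_dwt_mul_sqrt hτ hτ1).mul_right (zetaTwo + 8)) (fun i => ?_)
    (Eventually.of_forall fun N i => ?_)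
  · refine ((tendsto_corner i).const_mul _).congr' ?_
    filter_upwards [eventually_ge_atTop i] with N hN
    rw [if_pos (by omega)]
  · have hd := dwt_nonneg hτ hτ1 i
    have hz := zetaTwo_nonneg
    split_ifs with h
    · rw [Real.norm_of_nonneg (mul_nonneg hd (corner_nonneg N i)), mul_assoc]
      refine mul_le_mul_of_nonneg_left ?_ hd
      have h1 := corner_le (Nat.lt_succ_iff.1 h)
      have h2 := harmTwo_le (N + 1)
      have h3 := sqrtGap_le N i
      have s1 : Real.sqrt i ≤ Real.sqrt ((i : ℝ) + 1) := Real.sqrt_le_sqrt (by linarith)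
      have s2 : 1 ≤ Real.sqrt ((i : ℝ) + 1) := by rw [Real.one_le_sqrt]; simp
      nlinarith
    · rw [norm_zero]
      positivity

/-- Sum over `k ≤ N` with `s + k ≥ N` of the weights multiplying `dwt τ i * dwt τ j`. -/
noncomputable def edge (τ : ℝ) (N s : ℕ) : ℝ :=
  ∑ k ∈ Finset.range (N + 1), if N ≤ s + k then 3 * wt 1 k + dwt τ k else 0

theorem edge_nonneg {τ : ℝ} (hτ : 0 < τ) (hτ1 : τ ≤ 1) (N s : ℕ) : 0 ≤ edge τ N s :=
  Finset.sum_nonneg fun k _ => by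
    have := wt_nonneg one_pos k
    have := dwt_nonneg hτ hτ1 k
    split_ifs <;> positivity

theorem edge_le {τ : ℝ} (hτ : 0 < τ) (hτ1 : τ ≤ 1) (N s : ℕ) :
    edge τ N s ≤ (3 + τ⁻¹) * 2 * sqrtGap (N + 1) (s + 1) := by
  rw [edge, ← Finset.sum_filter, ← sum_Ico_sqrt_sub, Finset.mul_sum]
  have hset : (Finset.range (N + 1)).filter (fun k => N ≤ s + k) =
      Finset.Ico (N + 1 - (s + 1)) (N + 1) := by
    ext k
    simp only [Finset.mem_filter, Finset.mem_range, Finset.mem_Ico]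
    omega
  rw [hset]
  refine Finset.sum_le_sum fun k _ => ?_
  have h0 : (0 : ℝ) ≤ k := Nat.cast_nonneg k
  have hp : 0 < Real.sqrt ((k : ℝ) + 1) := Real.sqrt_pos.2 (by positivity)
  have h1 := inv_sqrt_succ_le k
  have h2 : ((k : ℝ) + 1)⁻¹ ≤ (Real.sqrt ((k : ℝ) + 1))⁻¹ := by
    apply inv_anti₀ hp
    rw [Real.sqrt_le_iff]
    exact ⟨by positivity, by nlinarith⟩
  have h3 : dwt τ k ≤ τ⁻¹ * ((k : ℝ) + 1)⁻¹ := by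
    have := wt_le hτ hτ1 k
    have := wt_nonneg one_pos k
    unfold dwt
    linarith
  have h4 : wt 1 k = ((k : ℝ) + 1)⁻¹ := rfl
  have h5 : 0 ≤ 3 + τ⁻¹ := by positivity
  calc 3 * wt 1 k + dwt τ k ≤ (3 + τ⁻¹) * ((k : ℝ) + 1)⁻¹ := by rw [h4]; linarith
    _ ≤ (3 + τ⁻¹) * (2 * (Real.sqrt ((k : ℝ) + 1) - Real.sqrt k)) := by
        gcongr
        exact h2.trans h1
    _ = _ := by push_cast; ring

theorem tendsto_sum_dwt_mul_edge {τ : ℝ} (hτ : 0 < τ) (hτ1 : τ ≤ 1) :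
    Tendsto (fun N => ∑ i ∈ Finset.range (N + 1), ∑ j ∈ Finset.range (N + 1),
      dwt τ i * dwt τ j * edge τ N (i + j)) atTop (nhds 0) := by
  have hC : 0 ≤ (3 + τ⁻¹) * 2 := by positivity
  have hzero : ∑' _ : ℕ × ℕ, (0 : ℝ) = 0 := tsum_zero
  rw [← hzero]
  simp only [← tsum_prod_ite_lt]
  have hs := summable_dwt_mul_sqrt hτ hτ1
  have hn : ∀ i, 0 ≤ dwt τ i * Real.sqrt ((i : ℝ) + 1) := fun i =>
    mul_nonneg (dwt_nonneg hτ hτ1 i) (Real.sqrt_nonneg _)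
  refine tendsto_tsum_of_dominated_convergence
    ((hs.mul_of_nonneg hs hn hn).mul_right ((3 + τ⁻¹) * 2)) (fun x => ?_)
    (Eventually.of_forall fun N x => ?_)
  · have h1 : Tendsto (fun N => edge τ N (x.1 + x.2)) atTop (nhds 0) := by
      have h2 := (((tendsto_add_atTop_iff_nat 1).2 (tendsto_sqrtGap (x.1 + x.2 + 1))).const_mul
        ((3 + τ⁻¹) * 2))
      rw [mul_zero] at h2
      exact squeeze_zero (fun N => edge_nonneg hτ hτ1 N _) (fun N => edge_le hτ hτ1 N _) h2
    have h2 := h1.const_mul (dwt τ x.1 * dwt τ x.2)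
    rw [mul_zero] at h2
    refine h2.congr' ?_
    filter_upwards [eventually_ge_atTop (x.1 + x.2)] with N hN
    rw [if_pos (by omega)]
  · obtain ⟨i, j⟩ := x
    have hi := dwt_nonneg hτ hτ1 i
    have hj := dwt_nonneg hτ hτ1 j
    split_ifs with h
    · rw [Real.norm_of_nonneg (mul_nonneg (mul_nonneg hi hj) (edge_nonneg hτ hτ1 N _))]
      have h1 := edge_le hτ hτ1 N (i + j)
      have h2 := sqrtGap_le (N + 1) (i + j + 1)
      have h3 : Real.sqrt ((i + j + 1 : ℕ) : ℝ) ≤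
          Real.sqrt ((i : ℝ) + 1) * Real.sqrt ((j : ℝ) + 1) := by
        rw [← Real.sqrt_mul (by positivity)]
        apply Real.sqrt_le_sqrt
        push_cast
        nlinarith [mul_nonneg (Nat.cast_nonneg (α := ℝ) i) (Nat.cast_nonneg (α := ℝ) j)]
      calc dwt τ i * dwt τ j * edge τ N (i + j)
          ≤ dwt τ i * dwt τ j * ((3 + τ⁻¹) * 2 *
            (Real.sqrt ((i : ℝ) + 1) * Real.sqrt ((j : ℝ) + 1))) := by
            gcongr
            exact h1.trans (by gcongr; exact h2.trans h3)
        _ = _ := by ring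
    · rw [norm_zero]
      positivity

theorem cube_tail_sub (τ : ℝ) (N : ℕ) :
    cube N (fun i j k => if N ≤ i + j + k then wt τ i * wt τ j * wt τ k else 0)
      - cube N (fun i j k => if N ≤ i + j + k then wt 1 i * wt 1 j * wt 1 k else 0) =
    3 * (∑ i ∈ Finset.range (N + 1), dwt τ i * corner N i) +
      ∑ i ∈ Finset.range (N + 1), ∑ j ∈ Finset.range (N + 1),
        dwt τ i * dwt τ j * edge τ N (i + j) := by
  let f : ℕ → ℕ → ℕ → ℝ := fun i j k =>
    if N ≤ i + j + k then dwt τ i * (wt 1 j * wt 1 k) else 0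
  let g : ℕ → ℕ → ℕ → ℝ := fun i j k =>
    if N ≤ i + j + k then dwt τ i * dwt τ j * wt 1 k else 0
  let h : ℕ → ℕ → ℕ → ℝ := fun i j k =>
    if N ≤ i + j + k then dwt τ i * dwt τ j * dwt τ k else 0
  have hf : cube N f = ∑ i ∈ Finset.range (N + 1), dwt τ i * corner N i := by
    simp only [cube, f, corner, Finset.mul_sum, mul_ite, mul_zero]
  have hg : 3 * cube N g + cube N h = ∑ i ∈ Finset.range (N + 1), ∑ j ∈ Finset.range (N + 1),
        dwt τ i * dwt τ j * edge τ N (i + j) := by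
    rw [← cube_mul_left, ← cube_add]
    simp only [cube, g, h, edge, Finset.mul_sum]
    refine Finset.sum_congr rfl fun i _ => Finset.sum_congr rfl fun j _ =>
      Finset.sum_congr rfl fun k _ => ?_
    split_ifs <;> ring
  have f1 : cube N (fun i j k => f j k i) = cube N f := cube_rotate N f
  have f2 : cube N (fun i j k => f k i j) = cube N f := (cube_rotate N fun i j k => f k i j).symm
  have g1 : cube N (fun i j k => g j k i) = cube N g := cube_rotate N g
  have g2 : cube N (fun i j k => g k i j) = cube N g := (cube_rotate N fun i j k => g k i j).symm
  have e : cube N (fun i j k => if N ≤ i + j + k then wt τ i * wt τ j * wt τ k else 0)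
      - cube N (fun i j k => if N ≤ i + j + k then wt 1 i * wt 1 j * wt 1 k else 0) =
      cube N f + cube N (fun i j k => f j k i) + cube N (fun i j k => f k i j) +
      cube N g + cube N (fun i j k => g j k i) + cube N (fun i j k => g k i j) + cube N h := by
    simp only [← cube_sub, ← cube_add]
    congr 1
    funext i j k
    simp only [f, g, h, dwt, show j + k + i = i + j + k by ring, show k + i + j = i + j + k by ring]
    split_ifs <;> ring
  rw [e, f1, f2, g1, g2, ← hf, ← hg]
  ring

/-- Up to a vanishing error, `trunc` varies with `τ` as the sum of the cubes of the weights. -/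
theorem tendsto_trunc_sub {τ : ℝ} (hτ : 0 < τ) (hτ1 : τ ≤ 1) :
    Tendsto (fun N => trunc τ N - trunc 1 N -
      ∑ i ∈ Finset.range (N + 1), (wt τ i ^ 3 - wt 1 i ^ 3)) atTop (nhds 0) := by
  have h1 := (tendsto_cube_tri hτ hτ1).sub (((tendsto_sum_dwt_mul_corner hτ hτ1).const_mul 3).add
    (tendsto_sum_dwt_mul_edge hτ hτ1))
  rw [add_zero, sub_self] at h1
  refine h1.congr fun N => ?_
  rw [← cube_tail_sub, trunc_eq hτ, trunc_eq one_pos]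
  ring

open Finset.HasAntidiagonal (antidiagonal)

/-- Summing power series with nonnegative coefficients term by term. -/
theorem hasSum_tsum_coeff {c : ℕ → ℕ → ℝ} (hc : ∀ a w, 0 ≤ c a w) {f : ℝ → ℕ → ℝ} {r : ℝ}
    (hf : ∀ t, |t| < r → ∀ a, HasSum (fun w => c a w * t ^ w) (f t a))
    (hs : ∀ t, 0 ≤ t → t < r → Summable (f t)) (hr : 0 < r) :
    (∀ w, Summable fun a => c a w) ∧
      ∀ t, |t| < r → HasSum (fun w => (∑' a, c a w) * t ^ w) (∑' a, f t a) := by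
  have key : ∀ t, |t| < r → Summable fun x : ℕ × ℕ => c x.1 x.2 * t ^ x.2 := by
    intro t ht
    refine Summable.of_norm ?_
    rw [summable_prod_of_nonneg fun x => norm_nonneg _]
    have h : ∀ a, HasSum (fun w => ‖c a w * t ^ w‖) (f |t| a) := fun a => by
      refine (hf |t| (by rwa [abs_abs]) a).congr_fun fun w => ?_
      rw [Real.norm_eq_abs, abs_mul, abs_pow, abs_of_nonneg (hc a w)]
    exact ⟨fun a => (h a).summable, by
      simpa only [fun a => (h a).tsum_eq] using hs |t| (abs_nonneg t) ht⟩
  have hcs : ∀ w, Summable fun a => c a w := fun w => by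
    have h := (key (r / 2) (by rw [abs_of_pos] <;> linarith)).prod_symm.prod_factor w
    exact (summable_mul_right_iff (pow_ne_zero w (by positivity : r / 2 ≠ 0))).1 h
  refine ⟨hcs, fun t ht => ?_⟩
  have h1 := (key t ht).hasSum
  rw [(h1.prod_fiberwise (hf t ht)).tsum_eq]
  rw [← (Equiv.prodComm ℕ ℕ).hasSum_iff] at h1
  exact h1.prod_fiberwise fun w => (hcs w).hasSum.mul_right (t ^ w)

theorem coeff_eq_of_hasSum {p q : ℕ → ℝ} {f : ℝ → ℝ} {r : ℝ} (hr : 0 < r)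
    (hp : ∀ t, |t| < r → HasSum (fun w => p w * t ^ w) (f t))
    (hq : ∀ t, |t| < r → HasSum (fun w => q w * t ^ w) (f t)) (w : ℕ) : p w = q w := by
  have conv : ∀ s : ℕ → ℝ, (∀ t, |t| < r → HasSum (fun w => s w * t ^ w) (f t)) →
      HasFPowerSeriesAt f (FormalMultilinearSeries.ofScalars ℝ s) 0 := by
    intro s hs
    rw [hasFPowerSeriesAt_iff]
    filter_upwards [Metric.ball_mem_nhds (0 : ℝ) hr] with t ht
    rw [mem_ball_zero_iff, Real.norm_eq_abs] at ht
    rw [zero_add]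
    refine (hs t ht).congr_fun fun w => ?_
    rw [FormalMultilinearSeries.coeff_ofScalars, smul_eq_mul, mul_comm]
  have h := (conv p hp).eq_formalMultilinearSeries (conv q hq)
  have h2 := congrArg (fun P : FormalMultilinearSeries ℝ ℝ ℝ => P.coeff w) h
  simpa [FormalMultilinearSeries.coeff_ofScalars] using h2

theorem hasSum_antidiagonal_mul_pow {α β : ℕ → ℝ} {t A B : ℝ}
    (ha : HasSum (fun i => α i * t ^ i) A) (hb : HasSum (fun i => β i * t ^ i) B) :
    HasSum (fun w => (∑ x ∈ antidiagonal w, α x.1 * β x.2) * t ^ w) (A * B) := by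
  have ha' := ha.summable.norm
  have hb' := hb.summable.norm
  have h := (summable_norm_sum_mul_antidiagonal_of_summable_norm ha' hb').of_norm.hasSum
  rw [← tsum_mul_tsum_eq_tsum_sum_antidiagonal_of_summable_norm ha' hb', ha.tsum_eq,
    hb.tsum_eq] at h
  refine h.congr_fun fun w => ?_
  rw [Finset.sum_mul]
  refine Finset.sum_congr rfl fun x hx => ?_
  rw [← Finset.HasAntidiagonal.mem_antidiagonal.1 hx, pow_add]
  ring

theorem hasSum_inv_sub {m c t : ℝ} (hm : 0 < m) (h : |c * t| < m) :
    HasSum (fun i : ℕ => c ^ i / m ^ (i + 1) * t ^ i) (m - c * t)⁻¹ := by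
  have hr : |c * t / m| < 1 := by rwa [abs_div, abs_of_pos hm, div_lt_one hm]
  have hne : m - c * t ≠ 0 := (sub_pos.2 ((le_abs_self _).trans_lt h)).ne'
  have h1 := (hasSum_geometric_of_abs_lt_one hr).mul_left m⁻¹
  rw [← mul_inv, mul_sub, mul_one, mul_div_cancel₀ _ hm.ne'] at h1
  refine h1.congr_fun fun i => ?_
  rw [div_pow, mul_pow, pow_succ]
  field_simp

theorem hasSum_triple_product {m n k t : ℝ} (h₁ : |3 * t| < m) (h₂ : |1 * t| < m)
    (h₃ : |2 * t| < n) (h₄ : |1 * t| < k) :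
    HasSum (fun w => (∑ x ∈ antidiagonal w,
      ((3 : ℝ) ^ x.1 / m ^ (x.1 + 1) - 1 ^ x.1 / m ^ (x.1 + 1)) *
        ∑ y ∈ antidiagonal x.2, (2 : ℝ) ^ y.1 / n ^ (y.1 + 1) * (1 ^ y.2 / k ^ (y.2 + 1))) * t ^ w)
      (((m - 3 * t)⁻¹ - (m - 1 * t)⁻¹) * ((n - 2 * t)⁻¹ * (k - 1 * t)⁻¹)) := by
  have e₁ := hasSum_inv_sub ((abs_nonneg _).trans_lt h₁) h₁
  have e₂ := hasSum_inv_sub ((abs_nonneg _).trans_lt h₂) h₂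
  have e₃ := hasSum_inv_sub ((abs_nonneg _).trans_lt h₃) h₃
  have e₄ := hasSum_inv_sub ((abs_nonneg _).trans_lt h₄) h₄
  have e : HasSum (fun i : ℕ => ((3 : ℝ) ^ i / m ^ (i + 1) - 1 ^ i / m ^ (i + 1)) * t ^ i)
      ((m - 3 * t)⁻¹ - (m - 1 * t)⁻¹) := by
    simpa only [sub_mul] using e₁.sub e₂
  have hprod := hasSum_antidiagonal_mul_pow e₃ e₄
  have htriple := hasSum_antidiagonal_mul_pow
    (α := fun i : ℕ => (3 : ℝ) ^ i / m ^ (i + 1) - 1 ^ i / m ^ (i + 1))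
    (β := fun v => ∑ y ∈ antidiagonal v,
      (2 : ℝ) ^ y.1 / n ^ (y.1 + 1) * (1 ^ y.2 / k ^ (y.2 + 1))) e hprod
  exact htriple

/-- Summand of the triple series at the indices `m = 2a + 3`, `n = 2b + 2`, `k = 2c + 1`. -/
noncomputable def tripleTerm (p q r a b c : ℕ) : ℝ :=
  (((2 * a + 3 : ℕ) : ℝ) ^ p * ((2 * b + 2 : ℕ) : ℝ) ^ q * ((2 * c + 1 : ℕ) : ℝ) ^ r)⁻¹

/-- Sum of the terms with given largest index. -/
noncomputable def tripleRow (p q r a : ℕ) : ℝ :=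
  ∑ b ∈ Finset.range (a + 1), ∑ c ∈ Finset.range (b + 1), tripleTerm p q r a b c

theorem tripleRow_nonneg (p q r a : ℕ) : 0 ≤ tripleRow p q r a :=
  Finset.sum_nonneg fun b _ => Finset.sum_nonneg fun c _ => by unfold tripleTerm; positivity

/-- Power series coefficients of the rows of `trunc`. -/
noncomputable def rowCoeff (a w : ℕ) : ℝ :=
  ∑ x ∈ antidiagonal w, ∑ y ∈ antidiagonal x.2,
    ((3 : ℝ) ^ x.1 - 1) * 2 ^ y.1 * tripleRow (x.1 + 1) (y.1 + 1) (y.2 + 1) a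

/-- A row of `trunc`. -/
noncomputable def truncRow (t : ℝ) (a : ℕ) : ℝ :=
  ∑ b ∈ Finset.range (a + 1), ∑ c ∈ Finset.range (b + 1),
    ((((2 * a + 3 : ℕ) : ℝ) - 3 * t)⁻¹ - (((2 * a + 3 : ℕ) : ℝ) - 1 * t)⁻¹) *
      ((((2 * b + 2 : ℕ) : ℝ) - 2 * t)⁻¹ * (((2 * c + 1 : ℕ) : ℝ) - 1 * t)⁻¹)

theorem trunc_eq_sum_truncRow (t : ℝ) (N : ℕ) :
    trunc ((1 - t) / 2) N = 48 * ∑ a ∈ Finset.range N, truncRow t a := by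
  have half : ∀ x y : ℝ, x = y / 2 → x⁻¹ = 2 * y⁻¹ := by
    rintro x y rfl
    rw [inv_div, div_eq_mul_inv]
  simp only [trunc, truncRow, Finset.mul_sum, wt]
  refine Finset.sum_congr rfl fun a _ => Finset.sum_congr rfl fun b _ =>
    Finset.sum_congr rfl fun c _ => ?_
  rw [half ((a : ℝ) + 3 * ((1 - t) / 2)) (((2 * a + 3 : ℕ) : ℝ) - 3 * t) (by push_cast; ring),
    half ((a : ℝ) + 1 + (1 - t) / 2) (((2 * a + 3 : ℕ) : ℝ) - 1 * t) (by push_cast; ring),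
    half ((b : ℝ) + 2 * ((1 - t) / 2)) (((2 * b + 2 : ℕ) : ℝ) - 2 * t) (by push_cast; ring),
    half ((c : ℝ) + (1 - t) / 2) (((2 * c + 1 : ℕ) : ℝ) - 1 * t) (by push_cast; ring)]
  ring

theorem three_pow_sub_one_nonneg (n : ℕ) : (0 : ℝ) ≤ 3 ^ n - 1 :=
  sub_nonneg.2 (one_le_pow₀ (by norm_num))

theorem rowCoeff_nonneg (a w : ℕ) : 0 ≤ rowCoeff a w :=
  Finset.sum_nonneg fun x _ => Finset.sum_nonneg fun y _ =>
    mul_nonneg (mul_nonneg (three_pow_sub_one_nonneg _) (by positivity)) (tripleRow_nonneg _ _ _ _)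

theorem hasSum_rowCoeff {t : ℝ} (ht : |t| < 1 / 3) (a : ℕ) :
    HasSum (fun w => rowCoeff a w * t ^ w) (truncRow t a) := by
  have small : ∀ (m : ℕ) (c : ℝ), 1 ≤ m → |c| ≤ 3 → |c * t| < m := by
    intro m c hm hc
    have hm' : (1 : ℝ) ≤ m := by exact_mod_cast hm
    rw [abs_mul]
    nlinarith [abs_nonneg t]
  have term := fun b c : ℕ => hasSum_triple_product (t := t)
    (small (2 * a + 3) 3 (by omega) (by norm_num)) (small (2 * a + 3) 1 (by omega) (by norm_num))
    (small (2 * b + 2) 2 (by omega) (by norm_num)) (small (2 * c + 1) 1 (by omega) (by norm_num))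
  refine (hasSum_sum fun b _ => hasSum_sum fun c _ => term b c).congr_fun fun w => ?_
  simp only [rowCoeff, tripleRow, tripleTerm, Finset.sum_mul, Finset.mul_sum]
  have swap : ∀ F : ℕ → ℕ → ℕ × ℕ → ℕ × ℕ → ℝ,
      (∑ x ∈ antidiagonal w, ∑ y ∈ antidiagonal x.2,
        ∑ b ∈ Finset.range (a + 1), ∑ c ∈ Finset.range (b + 1), F b c x y) =
      ∑ b ∈ Finset.range (a + 1), ∑ c ∈ Finset.range (b + 1),
        ∑ x ∈ antidiagonal w, ∑ y ∈ antidiagonal x.2, F b c x y := by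
    intro F
    refine (Finset.sum_congr rfl fun x _ => Finset.sum_comm).trans (Finset.sum_comm.trans ?_)
    refine Finset.sum_congr rfl fun b _ => ?_
    exact (Finset.sum_congr rfl fun x _ => Finset.sum_comm).trans Finset.sum_comm
  rw [swap]
  refine Finset.sum_congr rfl fun b _ => Finset.sum_congr rfl fun c _ =>
    Finset.sum_congr rfl fun x _ => Finset.sum_congr rfl fun y _ => ?_
  rw [one_pow, one_pow, mul_inv, mul_inv]
  ring

theorem summable_wt_cube {τ : ℝ} (hτ : 0 < τ) (hτ1 : τ ≤ 1) : Summable fun i => wt τ i ^ 3 := by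
  refine Summable.of_nonneg_of_le (fun i => pow_nonneg (wt_nonneg hτ i) 3) (fun i => ?_)
    (hasSum_zetaTwo.summable.mul_left (τ⁻¹ ^ 3))
  have h1 : ((i : ℝ) + 1)⁻¹ ≤ 1 := inv_le_one_of_one_le₀ (by simp)
  have h2 : 0 ≤ ((i : ℝ) + 1)⁻¹ := by positivity
  calc wt τ i ^ 3 ≤ (τ⁻¹ * ((i : ℝ) + 1)⁻¹) ^ 3 :=
        pow_le_pow_left₀ (wt_nonneg hτ i) (wt_le hτ hτ1 i) 3
    _ = τ⁻¹ ^ 3 * (((i : ℝ) + 1)⁻¹ ^ 2 * ((i : ℝ) + 1)⁻¹) := by ring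
    _ ≤ τ⁻¹ ^ 3 * (((i : ℝ) + 1)⁻¹ ^ 2 * 1) := by gcongr
    _ = _ := by rw [mul_one, inv_pow ((i : ℝ) + 1)]

theorem truncRow_zero (a : ℕ) : truncRow 0 a = 0 := by simp [truncRow]

/-- The limit of `trunc`, as a sum of cubes of weights. -/
theorem tendsto_sum_truncRow {t : ℝ} (ht : |t| < 1) :
    Tendsto (fun N => ∑ a ∈ Finset.range N, truncRow t a) atTop
      (nhds (48⁻¹ * ((∑' i, wt ((1 - t) / 2) i ^ 3) - ∑' i, wt (1 / 2) i ^ 3))) := by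
  obtain ⟨t1, t2⟩ := abs_lt.1 ht
  have p1 : 0 < (1 - t) / 2 := by linarith
  have p2 : (1 - t) / 2 ≤ 1 := by linarith
  have q1 : (0 : ℝ) < 1 / 2 := by norm_num
  have q2 : (1 / 2 : ℝ) ≤ 1 := by norm_num
  have hz : ∀ N, trunc (1 / 2) N = 0 := fun N => by
    have := trunc_eq_sum_truncRow 0 N
    simpa only [sub_zero, truncRow_zero, Finset.sum_const_zero, mul_zero] using this
  have l1 := (tendsto_trunc_sub p1 p2).sub (tendsto_trunc_sub q1 q2)
  have l2 := (tendsto_add_atTop_iff_nat 1).2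
    ((summable_wt_cube p1 p2).hasSum.tendsto_sum_nat)
  have l3 := (tendsto_add_atTop_iff_nat 1).2
    ((summable_wt_cube q1 q2).hasSum.tendsto_sum_nat)
  have l4 := ((l1.add (l2.sub l3)).const_mul (48⁻¹ : ℝ))
  rw [sub_zero, zero_add] at l4
  refine l4.congr fun N => ?_
  rw [hz, trunc_eq_sum_truncRow, Finset.sum_sub_distrib, Finset.sum_sub_distrib]
  ring

theorem hasSum_truncRow_of_nonneg {t : ℝ} (h0 : 0 ≤ t) (ht : t < 1 / 3) :
    HasSum (truncRow t)
      (48⁻¹ * ((∑' i, wt ((1 - t) / 2) i ^ 3) - ∑' i, wt (1 / 2) i ^ 3)) := by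
  have ha : |t| < 1 / 3 := by rwa [abs_of_nonneg h0]
  rw [hasSum_iff_tendsto_nat_of_nonneg fun a => (hasSum_rowCoeff ha a).nonneg fun w =>
    mul_nonneg (rowCoeff_nonneg a w) (pow_nonneg h0 w)]
  exact tendsto_sum_truncRow (ha.trans (by norm_num))

theorem hasSum_wt_cube {t : ℝ} (ht : |t| < 1) (i : ℕ) :
    HasSum (fun w => 8 * ((w + 2).choose 2 : ℝ) / ((2 * i + 1 : ℕ) : ℝ) ^ (w + 3) * t ^ w)
      (wt ((1 - t) / 2) i ^ 3) := by
  have hm : (1 : ℝ) ≤ ((2 * i + 1 : ℕ) : ℝ) := by exact_mod_cast (by omega)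
  have hm0 : (0 : ℝ) < ((2 * i + 1 : ℕ) : ℝ) := by positivity
  have hr : ‖t / ((2 * i + 1 : ℕ) : ℝ)‖ < 1 := by
    rw [Real.norm_eq_abs, abs_div, abs_of_pos hm0, div_lt_one hm0]
    linarith
  have hne : ((2 * i + 1 : ℕ) : ℝ) - t ≠ 0 := by linarith [(abs_lt.1 ht).2] |> ne_of_gt
  have h := (hasSum_choose_mul_geometric_of_norm_lt_one 2 hr).mul_left
    (8 / ((2 * i + 1 : ℕ) : ℝ) ^ 3)
  have e : 8 / ((2 * i + 1 : ℕ) : ℝ) ^ 3 * (1 / (1 - t / ((2 * i + 1 : ℕ) : ℝ)) ^ (2 + 1)) =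
      wt ((1 - t) / 2) i ^ 3 := by
    rw [wt, show (i : ℝ) + (1 - t) / 2 = (((2 * i + 1 : ℕ) : ℝ) - t) / 2 by push_cast; ring,
      show 1 - t / ((2 * i + 1 : ℕ) : ℝ) = (((2 * i + 1 : ℕ) : ℝ) - t) / ((2 * i + 1 : ℕ) : ℝ) by
        rw [sub_div, div_self hm0.ne']]
    generalize ((2 * i + 1 : ℕ) : ℝ) - t = x at hne
    generalize ((2 * i + 1 : ℕ) : ℝ) = m at hm0
    have := hm0.ne'
    simp only [div_pow, inv_pow]
    field_simp
    ring
  rw [e] at h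
  refine h.congr_fun fun w => ?_
  rw [div_pow, pow_add]
  field_simp

/-- Comparison of coefficients in the limit of `trunc`. -/
theorem tsum_rowCoeff_eq {w : ℕ} (hw : w ≠ 0) :
    (∀ w, Summable fun a => rowCoeff a w) ∧
    (Summable fun i => 8 * ((w + 2).choose 2 : ℝ) / ((2 * i + 1 : ℕ) : ℝ) ^ (w + 3)) ∧
    48 * ∑' a, rowCoeff a w =
      ∑' i : ℕ, 8 * ((w + 2).choose 2 : ℝ) / ((2 * i + 1 : ℕ) : ℝ) ^ (w + 3) := by
  have r3 : (0 : ℝ) < 1 / 3 := by norm_num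
  obtain ⟨s1, h1⟩ := hasSum_tsum_coeff rowCoeff_nonneg (fun t ht a => hasSum_rowCoeff ht a)
    (fun t h0 ht => (hasSum_truncRow_of_nonneg h0 ht).summable) r3
  obtain ⟨s2, h2⟩ := hasSum_tsum_coeff
    (c := fun i w => 8 * ((w + 2).choose 2 : ℝ) / ((2 * i + 1 : ℕ) : ℝ) ^ (w + 3))
    (f := fun t i => wt ((1 - t) / 2) i ^ 3)
    (fun i w => by positivity) (fun t ht i => hasSum_wt_cube (ht.trans (by norm_num)) i)
    (fun t h0 ht => summable_wt_cube (by linarith) (by linarith)) r3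
  refine ⟨s1, s2 w, ?_⟩
  have hlim : ∀ t : ℝ, |t| < 1 / 3 → 48 * ∑' a, truncRow t a =
      (∑' i, wt ((1 - t) / 2) i ^ 3) - ∑' i, wt (1 / 2) i ^ 3 := by
    intro t ht
    have hs : Summable (truncRow t) := by
      refine Summable.of_norm_bounded (hasSum_truncRow_of_nonneg (abs_nonneg t) ht).summable
        fun a => ?_
      have hb := hasSum_rowCoeff (t := |t|) (by rwa [abs_abs]) a
      rw [← (hasSum_rowCoeff ht a).tsum_eq, ← hb.tsum_eq]
      refine tsum_of_norm_bounded hb.summable.hasSum fun w => ?_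
      rw [Real.norm_eq_abs, abs_mul, abs_pow, abs_of_nonneg (rowCoeff_nonneg a w)]
    rw [tendsto_nhds_unique hs.hasSum.tendsto_sum_nat
      (tendsto_sum_truncRow (ht.trans (by norm_num)))]
    ring
  let W : ℕ → ℝ := fun w => ∑' i : ℕ, 8 * ((w + 2).choose 2 : ℝ) / ((2 * i + 1 : ℕ) : ℝ) ^ (w + 3)
  have key := coeff_eq_of_hasSum (p := fun w => 48 * ∑' a, rowCoeff a w)
    (q := fun w => W w - if w = 0 then ∑' i, wt (1 / 2) i ^ 3 else 0)
    (f := fun t => 48 * ∑' a, truncRow t a) r3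
    (fun t ht => ((h1 t ht).mul_left 48).congr_fun fun w => mul_assoc _ _ _)
    (fun t ht => by
      rw [hlim t ht]
      refine ((h2 t ht).sub (hasSum_ite_eq 0 (∑' i, wt (1 / 2) i ^ 3))).congr_fun fun w => ?_
      by_cases h : w = 0
      · simp [h, W]
      · simp [h, W]) w
  simpa [hw, W] using key

theorem summable_tripleRow {i : ℕ} (hi : i ≠ 0) (j l : ℕ) :
    Summable (tripleRow (i + 1) (j + 1) (l + 1)) := by
  have hs := (tsum_rowCoeff_eq one_ne_zero).1 (i + (j + l))
  refine Summable.of_nonneg_of_le (fun a => tripleRow_nonneg _ _ _ a) (fun a => ?_) hs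
  have h3 : (1 : ℝ) ≤ 3 ^ i - 1 := by
    have : (3 : ℝ) ^ 1 ≤ 3 ^ i := pow_le_pow_right₀ (by norm_num) (by omega)
    linarith
  have h2 : (1 : ℝ) ≤ 2 ^ j := one_le_pow₀ (by norm_num)
  have hn : ∀ x y : ℕ × ℕ,
      0 ≤ ((3 : ℝ) ^ x.1 - 1) * 2 ^ y.1 * tripleRow (x.1 + 1) (y.1 + 1) (y.2 + 1) a := fun x y =>
    mul_nonneg (mul_nonneg (three_pow_sub_one_nonneg _) (by positivity)) (tripleRow_nonneg _ _ _ _)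
  calc tripleRow (i + 1) (j + 1) (l + 1) a
      ≤ ((3 : ℝ) ^ i - 1) * 2 ^ j * tripleRow (i + 1) (j + 1) (l + 1) a :=
        le_mul_of_one_le_left (tripleRow_nonneg _ _ _ a) (one_le_mul_of_one_le_of_one_le h3 h2)
    _ ≤ ∑ y ∈ antidiagonal (j + l),
        ((3 : ℝ) ^ i - 1) * 2 ^ y.1 * tripleRow (i + 1) (y.1 + 1) (y.2 + 1) a :=
        Finset.single_le_sum (f := fun y : ℕ × ℕ =>
          ((3 : ℝ) ^ i - 1) * 2 ^ y.1 * tripleRow (i + 1) (y.1 + 1) (y.2 + 1) a)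
          (fun y _ => hn (i, 0) y)
          (Finset.HasAntidiagonal.mem_antidiagonal.2 (rfl : (j, l).1 + (j, l).2 = j + l))
    _ ≤ rowCoeff a (i + (j + l)) :=
        Finset.single_le_sum (f := fun x : ℕ × ℕ => ∑ y ∈ antidiagonal x.2,
          ((3 : ℝ) ^ x.1 - 1) * 2 ^ y.1 * tripleRow (x.1 + 1) (y.1 + 1) (y.2 + 1) a)
          (fun x _ => Finset.sum_nonneg fun y _ => hn x y)
          (Finset.HasAntidiagonal.mem_antidiagonal.2
            (rfl : (i, j + l).1 + (i, j + l).2 = i + (j + l)))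

theorem tsum_rowCoeff (w : ℕ) : ∑' a, rowCoeff a w =
    ∑ i ∈ Finset.range (w + 1), ∑ j ∈ Finset.range (w - i + 1),
      ((3 : ℝ) ^ i - 1) * 2 ^ j * ∑' a, tripleRow (i + 1) (j + 1) (w - i - j + 1) a := by
  refine HasSum.tsum_eq ?_
  simp only [rowCoeff, Finset.Nat.sum_antidiagonal_eq_sum_range_succ_mk]
  refine hasSum_sum fun i _ => hasSum_sum fun j _ => ?_
  rcases eq_or_ne i 0 with rfl | hi
  · simp
  · exact (summable_tripleRow hi j (w - i - j)).hasSum.mul_left _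

theorem limUnder_sum_Icc {u : ℕ → ℝ} {S : ℝ} (h : HasSum u S) (h0 : u 0 = 0) :
    limUnder atTop (fun N : ℕ => ∑ m ∈ Finset.Icc 1 N, u m) = S := by
  refine Tendsto.limUnder_eq ?_
  refine ((tendsto_add_atTop_iff_nat 1).2 h.tendsto_sum_nat).congr fun N => ?_
  rw [Finset.sum_range_succ', h0, add_zero, Finset.range_eq_Ico, Finset.sum_Ico_add' u 0 N 1]
  rfl

theorem sum_Ico_even (g : ℕ → ℝ) (a : ℕ) :
    (∑ m ∈ Finset.Ico 1 (2 * a + 3), if m % 2 = 0 then g m else 0) =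
      ∑ b ∈ Finset.range (a + 1), g (2 * b + 2) := by
  induction a with
  | zero => simp [Finset.sum_Ico_succ_top]
  | succ a ih =>
    rw [Finset.sum_range_succ, ← ih, show 2 * (a + 1) + 3 = 2 * a + 3 + 1 + 1 by ring,
      Finset.sum_Ico_succ_top (by omega), Finset.sum_Ico_succ_top (by omega),
      if_neg (by omega), if_pos (by omega), add_zero]
    rfl

theorem sum_Ico_odd (g : ℕ → ℝ) (a : ℕ) :
    (∑ m ∈ Finset.Ico 1 (2 * a + 2), if m % 2 = 1 then g m else 0) =
      ∑ b ∈ Finset.range (a + 1), g (2 * b + 1) := by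
  induction a with
  | zero => simp
  | succ a ih =>
    rw [Finset.sum_range_succ, ← ih, show 2 * (a + 1) + 2 = 2 * a + 2 + 1 + 1 by ring,
      Finset.sum_Ico_succ_top (by omega), Finset.sum_Ico_succ_top (by omega),
      if_neg (by omega), if_pos (by omega), add_zero]
    rfl

theorem tValue3_eq {p q r : ℕ} (h : Summable (tripleRow p q r)) :
    tValue3 p q r = 8 * ∑' a, tripleRow p q r a := by
  refine limUnder_sum_Icc (u := fun m₁ => ∑ m₂ ∈ Finset.Ico 1 m₁, ∑ m₃ ∈ Finset.Ico 1 m₂,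
      if m₁ % 2 = 1 ∧ m₂ % 2 = 0 ∧ m₃ % 2 = 1 then
        8 / ((m₁ : ℝ) ^ p * (m₂ : ℝ) ^ q * (m₃ : ℝ) ^ r) else 0) ?_ (by simp)
  have hφ : Function.Injective (fun a : ℕ => 2 * a + 3) := fun a b h => by simpa using h
  rw [← hφ.hasSum_iff]
  · refine (h.hasSum.mul_left 8).congr_fun fun a => ?_
    have hinner : ∀ m₂ ∈ Finset.Ico 1 (2 * a + 3), (∑ m₃ ∈ Finset.Ico 1 m₂,
        if (2 * a + 3) % 2 = 1 ∧ m₂ % 2 = 0 ∧ m₃ % 2 = 1 then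
          8 / (((2 * a + 3 : ℕ) : ℝ) ^ p * (m₂ : ℝ) ^ q * (m₃ : ℝ) ^ r) else 0) =
        if m₂ % 2 = 0 then ∑ m₃ ∈ Finset.Ico 1 m₂, if m₃ % 2 = 1 then
          8 / (((2 * a + 3 : ℕ) : ℝ) ^ p * (m₂ : ℝ) ^ q * (m₃ : ℝ) ^ r) else 0 else 0 := by
      intro m₂ _
      have ho : (2 * a + 3) % 2 = 1 := by omega
      by_cases h2 : m₂ % 2 = 0
      · simp [h2, ho]
      · simp [h2]
    simp only [Function.comp]
    rw [Finset.sum_congr rfl hinner, sum_Ico_even (fun m₂ => ∑ m₃ ∈ Finset.Ico 1 m₂,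
      if m₃ % 2 = 1 then 8 / (((2 * a + 3 : ℕ) : ℝ) ^ p * (m₂ : ℝ) ^ q * (m₃ : ℝ) ^ r) else 0),
      tripleRow, Finset.mul_sum]
    refine Finset.sum_congr rfl fun b _ => ?_
    rw [sum_Ico_odd (fun m₃ =>
      8 / (((2 * a + 3 : ℕ) : ℝ) ^ p * ((2 * b + 2 : ℕ) : ℝ) ^ q * (m₃ : ℝ) ^ r)), Finset.mul_sum]
    exact Finset.sum_congr rfl fun c _ => div_eq_mul_inv _ _
  · intro m hm
    refine Finset.sum_eq_zero fun m₂ h₂ => Finset.sum_eq_zero fun m₃ h₃ => if_neg ?_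
    rw [Finset.mem_Ico] at h₂ h₃
    rintro ⟨o, -, -⟩
    exact hm ⟨(m - 3) / 2, by dsimp only; omega⟩

theorem tValue1_eq {s : ℕ} (h : Summable fun i : ℕ => (((2 * i + 1 : ℕ) : ℝ) ^ s)⁻¹) :
    tValue1 s = 2 * ∑' i : ℕ, (((2 * i + 1 : ℕ) : ℝ) ^ s)⁻¹ := by
  refine limUnder_sum_Icc (u := fun m => if m % 2 = 1 then 2 / (m : ℝ) ^ s else 0) ?_ (by simp)
  have hφ : Function.Injective (fun a : ℕ => 2 * a + 1) := fun a b h => by simpa using h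
  rw [← hφ.hasSum_iff]
  · refine (h.hasSum.mul_left 2).congr_fun fun i => ?_
    simp only [Function.comp]
    rw [if_pos (by omega), div_eq_mul_inv]
  · intro m hm
    refine if_neg fun o => hm ⟨m / 2, by dsimp only; omega⟩

end TripleT

/-- Kaneko–Tsumura conjecture on triple T-values: for all `w ≥ 4`,
`∑_{a+b+c=w, a≥2, b,c≥1} 2ᵇ (3^{a-1} − 1) T(a,b,c) = (2/3)(w−1)(w−2) T(w)`. -/
theorem kaneko_tsumura_triple_T (w : ℕ) (hw : 4 ≤ w) :
    ∑ a ∈ Finset.Icc 2 (w - 2), ∑ b ∈ Finset.Icc 1 (w - a - 1),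
      (2 : ℝ) ^ b * ((3 : ℝ) ^ (a - 1) - 1) * tValue3 a b (w - a - b)
      = 2 / 3 * ((w : ℝ) - 1) * ((w : ℝ) - 2) * tValue1 w := by
  obtain ⟨v, rfl⟩ : ∃ v, w = v + 3 := ⟨w - 3, by omega⟩
  obtain ⟨-, hs, h⟩ := TripleT.tsum_rowCoeff_eq (w := v) (by omega)
  have hchoose : ((v + 2).choose 2 : ℝ) = ((v : ℝ) + 2) * (v + 1) / 2 := by
    rw [Nat.cast_choose_two]
    push_cast
    ring
  have hodd : Summable fun i : ℕ => (((2 * i + 1 : ℕ) : ℝ) ^ (v + 3))⁻¹ := by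
    simp only [div_eq_mul_inv] at hs
    refine (summable_mul_left_iff ?_).1 hs
    rw [hchoose]
    positivity
  simp only [div_eq_mul_inv] at h
  rw [tsum_mul_left, TripleT.tsum_rowCoeff, Finset.sum_range_succ'] at h
  have hl : ∑ a ∈ Finset.Icc 2 (v + 3 - 2), ∑ b ∈ Finset.Icc 1 (v + 3 - a - 1),
      (2 : ℝ) ^ b * ((3 : ℝ) ^ (a - 1) - 1) * tValue3 a b (v + 3 - a - b) =
      16 * ∑ i ∈ Finset.range v, ∑ j ∈ Finset.range (v - (i + 1) + 1),
        ((3 : ℝ) ^ (i + 1) - 1) * 2 ^ j *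
          ∑' a, TripleT.tripleRow (i + 1 + 1) (j + 1) (v - (i + 1) - j + 1) a := by
    rw [← Finset.Ico_add_one_right_eq_Icc, Finset.sum_Ico_eq_sum_range, Finset.mul_sum]
    refine Finset.sum_congr (by congr 1) fun i hi => ?_
    have hi := Finset.mem_range.1 hi
    rw [← Finset.Ico_add_one_right_eq_Icc, Finset.sum_Ico_eq_sum_range, Finset.mul_sum]
    refine Finset.sum_congr (by congr 1; omega) fun j hj => ?_
    have hj := Finset.mem_range.1 hj
    rw [show 2 + i = i + 1 + 1 by ring, show 1 + j = j + 1 by ring,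
      show v + 3 - (i + 1 + 1) - (j + 1) = v - (i + 1) - j + 1 by omega,
      TripleT.tValue3_eq (TripleT.summable_tripleRow i.succ_ne_zero _ _), Nat.add_sub_cancel]
    ring
  rw [hl, TripleT.tValue1_eq hodd]
  simp only [pow_zero, sub_self, zero_mul, Finset.sum_const_zero, add_zero] at h
  rw [hchoose] at h
  push_cast
  push_cast at h
  linarith
end

section
/- For every integer w ≥ 3, with v = w−1, ∑_{a+b=w, a≥2, b≥1} ζ(ā,b̄) = ζ(1̄,v) − ζ(1̄,v̄) + ζ(w̄). -/
open Filter

open Topology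

/-- Partial sums of the alternating harmonic series `∑ (-1)ⁿ / n`. -/
noncomputable def altHarmonic (N : ℕ) : ℝ :=
  ∑ n ∈ Finset.Icc 1 N, (-1 : ℝ) ^ n / (n : ℝ)

theorem altHarmonic_succ (N : ℕ) :
    altHarmonic (N + 1) = altHarmonic N + (-1 : ℝ) ^ (N + 1) / ((N + 1 : ℕ) : ℝ) :=
  Finset.sum_Icc_succ_top (by omega) _

theorem exists_tendsto_altHarmonic : ∃ L, Tendsto altHarmonic atTop (𝓝 L) := by
  have hanti : Antitone fun i : ℕ => 1 / ((i : ℝ) + 1) := fun i j hij => by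
    have : (i : ℝ) ≤ j := by exact_mod_cast hij
    dsimp only
    gcongr
  obtain ⟨l, hl⟩ := hanti.tendsto_alternating_series_of_tendsto_zero
    tendsto_one_div_add_atTop_nhds_zero_nat
  refine ⟨-l, hl.neg.congr fun N => ?_⟩
  induction N with
  | zero => simp [altHarmonic]
  | succ k ih =>
    rw [altHarmonic_succ, ← ih, Finset.sum_range_succ]
    push_cast
    ring

theorem exists_abs_le_of_tendsto {f : ℕ → ℝ} {L : ℝ} (h : Tendsto f atTop (𝓝 L)) :
    ∃ C, ∀ n, |f n| ≤ C := by
  obtain ⟨C, hC⟩ := (Metric.isBounded_range_of_tendsto f h).exists_norm_le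
  exact ⟨C, fun n => hC _ ⟨n, rfl⟩⟩

/-- Tannery's theorem for sums `∑_{1 ≤ m ≤ N} c m * B N m` with `B` bounded. -/
theorem tendsto_sum_Icc_mul {c : ℕ → ℝ} {B : ℕ → ℕ → ℝ} {L : ℕ → ℝ} {C : ℝ}
    (hc : Summable fun m => |c m|) (hB : ∀ N m, |B N m| ≤ C)
    (hL : ∀ m, Tendsto (fun N => B N m) atTop (𝓝 (L m))) :
    Tendsto (fun N : ℕ => ∑ m ∈ Finset.Icc 1 N, c m * B N m) atTop
      (𝓝 (∑' m, if 1 ≤ m then c m * L m else 0)) := by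
  have key := tendsto_tsum_of_dominated_convergence (𝓕 := atTop)
    (f := fun (N m : ℕ) => if m ∈ Finset.Icc 1 N then c m * B N m else 0)
    (g := fun m => if 1 ≤ m then c m * L m else 0)
    (bound := fun m => |c m| * C) (hc.mul_right C) ?_ ?_
  · refine key.congr fun N => ?_
    rw [tsum_eq_sum (s := Finset.Icc 1 N) fun m hm => if_neg hm]
    exact Finset.sum_congr rfl fun m hm => if_pos hm
  · intro m
    by_cases hm : 1 ≤ m
    · rw [if_pos hm]
      refine ((hL m).const_mul (c m)).congr' ?_
      filter_upwards [eventually_ge_atTop m] with N hN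
      rw [if_pos (Finset.mem_Icc.2 ⟨hm, hN⟩)]
    · simp [hm]
  · refine Eventually.of_forall fun N m => ?_
    have h0 : |c m| * |B N m| ≤ |c m| * C := mul_le_mul_of_nonneg_left (hB N m) (abs_nonneg _)
    split_ifs
    · simpa [abs_mul] using h0
    · simpa using (mul_nonneg (abs_nonneg _) (abs_nonneg _)).trans h0

theorem summable_abs_pow_div {e : ℝ} (he : |e| = 1) {s : ℕ} (hs : 2 ≤ s) :
    Summable fun n : ℕ => |e ^ n / (n : ℝ) ^ s| := by
  refine (Real.summable_one_div_nat_pow.2 hs).congr fun n => ?_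
  rw [abs_div, abs_pow, he, one_pow, abs_of_nonneg (by positivity : (0 : ℝ) ≤ (n : ℝ) ^ s)]

/-- Partial sums of a depth-1 Euler sum. -/
noncomputable def eulerPartial1 (s : ℕ) (e : ℝ) (N : ℕ) : ℝ :=
  ∑ n ∈ Finset.Icc 1 N, e ^ n / (n : ℝ) ^ s

/-- Partial sums of a depth-2 Euler sum. -/
noncomputable def eulerPartial2 (s₁ s₂ : ℕ) (e₁ e₂ : ℝ) (N : ℕ) : ℝ :=
  ∑ n₁ ∈ Finset.Icc 1 N, ∑ n₂ ∈ Finset.Ico 1 n₁,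
    e₁ ^ n₁ * e₂ ^ n₂ / ((n₁ : ℝ) ^ s₁ * (n₂ : ℝ) ^ s₂)

theorem eulerPartial2_succ (s₁ s₂ : ℕ) (e₁ e₂ : ℝ) (N : ℕ) :
    eulerPartial2 s₁ s₂ e₁ e₂ (N + 1) = eulerPartial2 s₁ s₂ e₁ e₂ N +
      ∑ m ∈ Finset.Icc 1 N,
        e₁ ^ (N + 1) * e₂ ^ m / (((N + 1 : ℕ) : ℝ) ^ s₁ * (m : ℝ) ^ s₂) :=
  Finset.sum_Icc_succ_top (by omega) _

theorem exists_tendsto_eulerPartial1 {s : ℕ} {e : ℝ} (he : |e| = 1) (hs : 2 ≤ s) :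
    ∃ L, Tendsto (eulerPartial1 s e) atTop (𝓝 L) := by
  have h := tendsto_sum_Icc_mul (B := fun _ _ => 1) (L := fun _ => 1) (C := 1)
    (summable_abs_pow_div he hs) (by simp) (fun _ => tendsto_const_nhds)
  exact ⟨_, h.congr fun N => by simp [eulerPartial1]⟩

theorem exists_tendsto_eulerPartial1_neg_one {s : ℕ} (hs : 1 ≤ s) :
    ∃ L, Tendsto (eulerPartial1 s (-1)) atTop (𝓝 L) := by
  obtain rfl | hs := hs.eq_or_lt
  · obtain ⟨L, hL⟩ := exists_tendsto_altHarmonic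
    exact ⟨L, hL.congr fun N => by simp [eulerPartial1, altHarmonic]⟩
  · exact exists_tendsto_eulerPartial1 (by simp) hs

/-- Convergence of `ζ(ā, b̄)` for `a ≥ 2` and `b ≥ 1`. -/
theorem exists_tendsto_eulerPartial2_neg_one {a b : ℕ} (ha : 2 ≤ a) (hb : 1 ≤ b) :
    ∃ L, Tendsto (eulerPartial2 a b (-1) (-1)) atTop (𝓝 L) := by
  obtain ⟨_, hL⟩ := exists_tendsto_eulerPartial1_neg_one hb
  obtain ⟨C, hC⟩ := exists_abs_le_of_tendsto hL
  have h := tendsto_sum_Icc_mul (B := fun _ m => eulerPartial1 b (-1) (m - 1)) (C := C)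
    (summable_abs_pow_div (e := -1) (by simp) ha) (fun _ m => hC _)
    (fun _ => tendsto_const_nhds)
  refine ⟨_, h.congr fun N => Finset.sum_congr rfl fun n hn => ?_⟩
  have hn := (Finset.mem_Icc.1 hn).1
  rw [eulerPartial1, Finset.mul_sum]
  refine Finset.sum_congr (by ext m; simp; omega) fun m _ => ?_
  rw [div_mul_div_comm]

/-- Convergence of `ζ(1̄, v; -1, e)` for `v ≥ 2`. -/
theorem exists_tendsto_eulerPartial2_one {v : ℕ} {e : ℝ} (he : |e| = 1) (hv : 2 ≤ v) :
    ∃ L, Tendsto (eulerPartial2 1 v (-1) e) atTop (𝓝 L) := by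
  obtain ⟨l, hl⟩ := exists_tendsto_altHarmonic
  obtain ⟨C, hC⟩ := exists_abs_le_of_tendsto hl
  have h := tendsto_sum_Icc_mul (B := fun N m => altHarmonic N - altHarmonic m) (C := C + C)
    (summable_abs_pow_div he hv) (fun N m => (abs_sub _ _).trans (add_le_add (hC _) (hC _)))
    (fun m => hl.sub_const (altHarmonic m))
  refine ⟨_, h.congr fun N => ?_⟩
  induction N with
  | zero => simp [eulerPartial2]
  | succ N ih =>
    rw [eulerPartial2_succ, ← ih, Finset.sum_Icc_succ_top (by omega), sub_self, mul_zero, add_zero,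
      ← Finset.sum_add_distrib]
    refine Finset.sum_congr rfl fun m _ => ?_
    rw [altHarmonic_succ, pow_one, mul_comm ((-1 : ℝ) ^ (N + 1)) (e ^ m),
      mul_comm ((N + 1 : ℕ) : ℝ) ((m : ℝ) ^ v), ← div_mul_div_comm]
    ring

theorem sum_one_div_pow_mul_pow (u : ℕ) {x y : ℝ} (hx : x ≠ 0) (hy : y ≠ 0) (hxy : x - y ≠ 0) :
    ∑ a ∈ Finset.Icc 2 (u + 1), 1 / (x ^ a * y ^ (u + 2 - a)) =
      1 / (y ^ (u + 1) * (x - y)) - 1 / (x ^ (u + 1) * (x - y)) - 1 / (x * y ^ (u + 1)) := by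
  induction u with
  | zero =>
    simp
    field_simp
    ring
  | succ u ih =>
    have hstep : ∑ a ∈ Finset.Icc 2 (u + 1), 1 / (x ^ a * y ^ (u + 1 + 2 - a)) =
        (∑ a ∈ Finset.Icc 2 (u + 1), 1 / (x ^ a * y ^ (u + 2 - a))) / y := by
      rw [Finset.sum_div]
      refine Finset.sum_congr rfl fun a ha => ?_
      have := (Finset.mem_Icc.1 ha).2
      rw [show u + 1 + 2 - a = (u + 2 - a) + 1 by omega, pow_succ, div_div, mul_assoc]
    rw [Finset.sum_Icc_succ_top (by omega), hstep, ih, show u + 1 + 2 - (u + 1 + 1) = 1 by omega]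
    field_simp
    ring

theorem altHarmonic_eq_sum_reflect (N : ℕ) :
    altHarmonic N =
      ∑ m ∈ Finset.Icc 1 N, (-1 : ℝ) ^ (N + 1 + m) / (((N + 1 : ℕ) : ℝ) - m) := by
  refine Finset.sum_bij' (fun m _ => N + 1 - m) (fun m _ => N + 1 - m)
    ?_ ?_ ?_ ?_ ?_ <;> intro m hm <;> have hm := Finset.mem_Icc.1 hm
  · exact Finset.mem_Icc.2 (by omega)
  · exact Finset.mem_Icc.2 (by omega)
  · omega
  · omega
  · rw [Nat.cast_sub (by omega), sub_sub_cancel]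
    congr 1
    obtain ⟨k, rfl⟩ := Nat.exists_eq_add_of_le hm.2
    rw [show m + k + 1 + (m + k + 1 - m) = m + 2 * (k + 1) by omega, pow_add, pow_mul]
    simp

/-- The truncated form of the sum formula, with its error term. -/
theorem sum_eulerPartial2 (u N : ℕ) :
    ∑ a ∈ Finset.Icc 2 (u + 1), eulerPartial2 a (u + 2 - a) (-1) (-1) N =
      eulerPartial2 1 (u + 1) (-1) 1 N - eulerPartial2 1 (u + 1) (-1) (-1) N +
        eulerPartial1 (u + 2) (-1) N -
        ∑ m ∈ Finset.Icc 1 N,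
          (1 : ℝ) ^ m / (m : ℝ) ^ (u + 1) * (altHarmonic N - altHarmonic (N - m)) := by
  induction N with
  | zero => simp [eulerPartial1, eulerPartial2]
  | succ N ih =>
    have hn : ((N + 1 : ℕ) : ℝ) ≠ 0 := by positivity
    have herr : ∑ m ∈ Finset.Icc 1 N, (1 : ℝ) ^ m / (m : ℝ) ^ (u + 1) *
          (altHarmonic (N + 1) - altHarmonic (N + 1 - m)) =
        ∑ m ∈ Finset.Icc 1 N, (1 : ℝ) ^ m / (m : ℝ) ^ (u + 1) *
          (altHarmonic N - altHarmonic (N - m)) +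
        ∑ m ∈ Finset.Icc 1 N, 1 / (m : ℝ) ^ (u + 1) *
          ((-1) ^ (N + 1) / ((N + 1 : ℕ) : ℝ) -
            (-1) ^ (N + 1 + m) / (((N + 1 : ℕ) : ℝ) - m)) := by
      rw [← Finset.sum_add_distrib]
      refine Finset.sum_congr rfl fun m hm => ?_
      obtain ⟨k, rfl⟩ := Nat.exists_eq_add_of_le (Finset.mem_Icc.1 hm).2
      have hpow : (-1 : ℝ) ^ (m + k + 1 + m) = (-1) ^ (k + 1) := by
        rw [show m + k + 1 + m = 2 * m + (k + 1) by omega, pow_add, pow_mul]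
        simp
      rw [show m + k + 1 - m = k + 1 by omega, show m + k - m = k by omega, altHarmonic_succ,
        altHarmonic_succ, hpow, show ((m + k + 1 : ℕ) : ℝ) - m = ((k + 1 : ℕ) : ℝ) by
          push_cast; ring, one_pow]
      ring
    have hmain : ∑ a ∈ Finset.Icc 2 (u + 1), ∑ m ∈ Finset.Icc 1 N,
          (-1 : ℝ) ^ (N + 1) * (-1) ^ m / (((N + 1 : ℕ) : ℝ) ^ a * (m : ℝ) ^ (u + 2 - a)) =
        ∑ m ∈ Finset.Icc 1 N, (-1 : ℝ) ^ (N + 1) * 1 ^ m /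
            (((N + 1 : ℕ) : ℝ) ^ 1 * (m : ℝ) ^ (u + 1)) -
        ∑ m ∈ Finset.Icc 1 N, (-1 : ℝ) ^ (N + 1) * (-1) ^ m /
            (((N + 1 : ℕ) : ℝ) ^ 1 * (m : ℝ) ^ (u + 1)) -
        ∑ m ∈ Finset.Icc 1 N, 1 / (m : ℝ) ^ (u + 1) *
          ((-1) ^ (N + 1) / ((N + 1 : ℕ) : ℝ) -
            (-1) ^ (N + 1 + m) / (((N + 1 : ℕ) : ℝ) - m)) -
        1 / ((N + 1 : ℕ) : ℝ) ^ (u + 1) * altHarmonic N := by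
      rw [Finset.sum_comm, altHarmonic_eq_sum_reflect, Finset.mul_sum,
        ← Finset.sum_sub_distrib, ← Finset.sum_sub_distrib, ← Finset.sum_sub_distrib]
      refine Finset.sum_congr rfl fun m hm => ?_
      have hm := Finset.mem_Icc.1 hm
      have hm0 : (m : ℝ) ≠ 0 := by
        have : m ≠ 0 := by omega
        exact_mod_cast this
      have hsub : ((N + 1 : ℕ) : ℝ) - m ≠ 0 := by
        have : N + 1 ≠ m := by omega
        exact sub_ne_zero.2 (by exact_mod_cast this)
      have hgeom := sum_one_div_pow_mul_pow u hn hm0 hsub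
      simp_rw [div_eq_mul_one_div ((-1 : ℝ) ^ (N + 1) * (-1) ^ m)]
      rw [← Finset.mul_sum, hgeom, pow_add (-1 : ℝ) (N + 1) m]
      generalize ((N + 1 : ℕ) : ℝ) = x at *
      field_simp
      ring
    have hone : eulerPartial1 (u + 2) (-1) (N + 1) = eulerPartial1 (u + 2) (-1) N +
        (-1) ^ (N + 1) / ((N + 1 : ℕ) : ℝ) ^ (u + 2) :=
      Finset.sum_Icc_succ_top (by omega) _
    have hlast : (1 : ℝ) ^ (N + 1) / ((N + 1 : ℕ) : ℝ) ^ (u + 1) *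
          (altHarmonic (N + 1) - altHarmonic (N + 1 - (N + 1))) =
        1 / ((N + 1 : ℕ) : ℝ) ^ (u + 1) * altHarmonic N +
          (-1) ^ (N + 1) / ((N + 1 : ℕ) : ℝ) ^ (u + 2) := by
      have h0 : altHarmonic 0 = 0 := by simp [altHarmonic]
      rw [Nat.sub_self, h0, altHarmonic_succ, one_pow, sub_zero, mul_add, div_mul_div_comm,
        one_mul, ← pow_succ]
    simp_rw [eulerPartial2_succ]
    rw [Finset.sum_add_distrib, ih, hmain, hone, Finset.sum_Icc_succ_top (by omega), herr, hlast]
    ring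

theorem tendsto_error_zero {v : ℕ} (hv : 2 ≤ v) :
    Tendsto (fun N : ℕ => ∑ m ∈ Finset.Icc 1 N,
      (1 : ℝ) ^ m / (m : ℝ) ^ v * (altHarmonic N - altHarmonic (N - m))) atTop (𝓝 0) := by
  obtain ⟨l, hl⟩ := exists_tendsto_altHarmonic
  obtain ⟨C, hC⟩ := exists_abs_le_of_tendsto hl
  have h := tendsto_sum_Icc_mul (B := fun N m => altHarmonic N - altHarmonic (N - m))
    (L := fun _ => 0) (C := C + C) (summable_abs_pow_div (e := 1) (by simp) hv)
    (fun N m => (abs_sub _ _).trans (add_le_add (hC _) (hC _)))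
    (fun m => by simpa using hl.sub (hl.comp (tendsto_sub_atTop_nat m)))
  simpa using h

/-- For `w ≥ 3`, with `v = w − 1`: `∑_{a+b=w, a≥2} ζ(ā,b̄) = ζ(1̄,v) − ζ(1̄,v̄) + ζ(w̄)`. -/
theorem sum_zeta_bar_bar (w : ℕ) (hw : 3 ≤ w) :
    ∑ a ∈ Finset.Icc 2 (w - 1), eulerSum2 a (w - a) (-1) (-1)
      = eulerSum2 1 (w - 1) (-1) 1 - eulerSum2 1 (w - 1) (-1) (-1) + eulerSum1 w (-1) := by
  obtain ⟨u, rfl⟩ : ∃ u, w = u + 2 := ⟨w - 2, by omega⟩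
  have hu : 2 ≤ u + 1 := by omega
  have hlim2 {s₁ s₂ : ℕ} {e₁ e₂ : ℝ} (h : ∃ L, Tendsto (eulerPartial2 s₁ s₂ e₁ e₂) atTop (𝓝 L)) :
      Tendsto (eulerPartial2 s₁ s₂ e₁ e₂) atTop (𝓝 (eulerSum2 s₁ s₂ e₁ e₂)) :=
    tendsto_nhds_limUnder h
  have hleft := tendsto_finsetSum (Finset.Icc 2 (u + 1)) fun a ha =>
    hlim2 (exists_tendsto_eulerPartial2_neg_one (a := a) (b := u + 2 - a)
      (Finset.mem_Icc.1 ha).1 (by have := (Finset.mem_Icc.1 ha).2; omega))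
  have hone : Tendsto (eulerPartial1 (u + 2) (-1)) atTop (𝓝 (eulerSum1 (u + 2) (-1))) :=
    tendsto_nhds_limUnder (exists_tendsto_eulerPartial1_neg_one (by omega))
  have hright := (((hlim2 (exists_tendsto_eulerPartial2_one (e := 1) (by simp) hu)).sub
    (hlim2 (exists_tendsto_eulerPartial2_one (e := -1) (by simp) hu))).add hone).sub
    (tendsto_error_zero hu)
  rw [sub_zero] at hright
  exact tendsto_nhds_unique hleft (hright.congr fun N => (sum_eulerPartial2 u N).symm)
end

section
/- For every integer w ≥ 3, with v = w−1, the double T-values satisfy ∑_{a+b=w, a≥2, b≥1} T(a,b) = 2·( ζ(w) − ζ(w̄) + ζ(v̄,1̄) + ζ(1̄,v̄) − ζ(v̄,1) − ζ(1̄,v) ). -/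
open Filter

open Topology

/-- The harmonic number `∑_{j=1}^n 1/j` as a real number. -/
noncomputable def harmonicReal (n : ℕ) : ℝ := ∑ j ∈ Finset.Icc 1 n, 1 / (j : ℝ)

/-- `1/m` for odd `m`, and `0` for even `m`. -/
noncomputable def oddRecip (m : ℕ) : ℝ := if m % 2 = 1 then 1 / (m : ℝ) else 0

/-- The difference between the partial sums of the two sides of the sum formula
for double T-values. -/
noncomputable def sumFormulaError (v N : ℕ) : ℝ :=
  ∑ n ∈ Finset.Icc 1 N, (if n % 2 = 1 then 1 / (n : ℝ) ^ v else 0)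
    * (∑ j ∈ Finset.Icc 1 N, oddRecip j - ∑ j ∈ Finset.Icc 1 (N - n), oddRecip j)

theorem harmonicReal_succ (n : ℕ) :
    harmonicReal (n + 1) = harmonicReal n + 1 / ((n : ℝ) + 1) := by
  unfold harmonicReal
  rw [Finset.sum_Icc_succ_top (by omega)]
  push_cast
  rfl

theorem harmonicReal_mono : Monotone harmonicReal :=
  monotone_nat_of_le_succ fun n => by
    rw [harmonicReal_succ]
    have : (0 : ℝ) ≤ 1 / ((n : ℝ) + 1) := by positivity
    linarith

theorem one_le_harmonicReal {n : ℕ} (hn : 1 ≤ n) : 1 ≤ harmonicReal n := by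
  have h := harmonicReal_mono hn
  simpa [harmonicReal] using h

theorem harmonicReal_le_two_mul_sqrt (n : ℕ) : harmonicReal n ≤ 2 * √(n : ℝ) := by
  rcases Nat.eq_zero_or_pos n with rfl | hn
  · simp [harmonicReal]
  · have hn' : (0 : ℝ) < n := by exact_mod_cast hn
    have h1 := harmonic_le_one_add_log n
    have h2 : ((harmonic n : ℚ) : ℝ) = harmonicReal n := by
      rw [harmonic_eq_sum_Icc, harmonicReal]
      push_cast
      simp
    have h3 := Real.log_le_sub_one_of_pos (Real.sqrt_pos.mpr hn')
    rw [Real.log_sqrt hn'.le] at h3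
    rw [h2] at h1
    linarith

theorem tendsto_harmonicReal_div : Tendsto (fun N : ℕ => harmonicReal N / N) atTop (𝓝 0) := by
  have h : Tendsto (fun n : ℕ => 1 / ((n : ℝ) + 1)) atTop (𝓝 0) :=
    tendsto_one_div_add_atTop_nhds_zero_nat
  refine h.cesaro.congr fun N => ?_
  have : ∑ i ∈ Finset.range N, 1 / ((i : ℝ) + 1) = harmonicReal N := by
    induction N with
    | zero => simp [harmonicReal]
    | succ N ih => rw [Finset.sum_range_succ, ih, harmonicReal_succ]
  rw [this]
  ring

theorem sum_Icc_one_eq_sum_range {f : ℕ → ℝ} (hf : f 0 = 0) (N : ℕ) :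
    ∑ n ∈ Finset.Icc 1 N, f n = ∑ n ∈ Finset.range (N + 1), f n := by
  induction N with
  | zero => simp [hf]
  | succ N ih => rw [Finset.sum_Icc_succ_top (by omega), ih, Finset.sum_range_succ _ (N + 1)]

theorem exists_tendsto_sum_div_pow {g : ℕ → ℝ} {C : ℝ} {s : ℕ} (hs : 2 ≤ s)
    (hg : ∀ n, 1 ≤ n → |g n| ≤ C * harmonicReal n) :
    ∃ l, Tendsto (fun N : ℕ => ∑ n ∈ Finset.Icc 1 N, g n / (n : ℝ) ^ s) atTop (𝓝 l) := by
  have hC : 0 ≤ C := by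
    have h := (abs_nonneg _).trans (hg 1 le_rfl)
    simpa [harmonicReal] using h
  have hsum : Summable fun n : ℕ => g n / (n : ℝ) ^ s := by
    refine Summable.of_norm_bounded
      ((Real.summable_one_div_nat_rpow (p := 3 / 2)).mpr (by norm_num) |>.mul_left (2 * C)) ?_
    intro n
    rcases Nat.eq_zero_or_pos n with rfl | hn
    · simp [show s ≠ 0 by omega]
    · have hn' : (1 : ℝ) ≤ n := by exact_mod_cast hn
      have hn0 : (0 : ℝ) < n := by linarith
      have hsq : √(n : ℝ) * (n : ℝ) ^ (3 / 2 : ℝ) = (n : ℝ) ^ 2 := by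
        rw [Real.sqrt_eq_rpow, ← Real.rpow_add hn0, ← Real.rpow_natCast]
        norm_num
      have hpow : (n : ℝ) ^ 2 ≤ (n : ℝ) ^ s := pow_le_pow_right₀ hn' hs
      have hp : 0 < (n : ℝ) ^ (3 / 2 : ℝ) := Real.rpow_pos_of_pos hn0 _
      rw [Real.norm_eq_abs, abs_div, abs_of_pos (pow_pos hn0 s)]
      calc |g n| / (n : ℝ) ^ s ≤ C * (2 * √(n : ℝ)) / (n : ℝ) ^ 2 := by
            gcongr
            exact (hg n hn).trans (by gcongr; exact harmonicReal_le_two_mul_sqrt n)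
        _ = 2 * C * (1 / (n : ℝ) ^ (3 / 2 : ℝ)) := by
            rw [← hsq]
            have : 0 < √(n : ℝ) := Real.sqrt_pos.mpr hn0
            field_simp
  refine ⟨_, (hsum.hasSum.tendsto_sum_nat.comp (tendsto_add_atTop_nat 1)).congr fun N => ?_⟩
  exact (sum_Icc_one_eq_sum_range (by simp [show s ≠ 0 by omega]) N).symm

theorem abs_sum_Ico_le_harmonicReal {f : ℕ → ℝ} {C : ℝ} (hC : 0 ≤ C) {n : ℕ}
    (hf : ∀ j, 1 ≤ j → |f j| ≤ C * (1 / (j : ℝ))) :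
    |∑ j ∈ Finset.Ico 1 n, f j| ≤ C * harmonicReal n := by
  refine (Finset.abs_sum_le_sum_abs _ _).trans ?_
  rw [harmonicReal, Finset.mul_sum]
  calc ∑ j ∈ Finset.Ico 1 n, |f j| ≤ ∑ j ∈ Finset.Ico 1 n, C * (1 / (j : ℝ)) :=
        Finset.sum_le_sum fun j hj => hf j (Finset.mem_Ico.mp hj).1
    _ ≤ _ := Finset.sum_le_sum_of_subset_of_nonneg Finset.Ico_subset_Icc_self
        fun _ _ _ => by positivity

theorem one_div_pow_le_one_div {b j : ℕ} (hb : 1 ≤ b) (hj : 1 ≤ j) :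
    1 / (j : ℝ) ^ b ≤ 1 / (j : ℝ) := by
  have hj' : (1 : ℝ) ≤ j := by exact_mod_cast hj
  have : (j : ℝ) ≤ (j : ℝ) ^ b := le_self_pow₀ hj' (by omega)
  gcongr

theorem tendsto_eulerSum1 {s : ℕ} (hs : 2 ≤ s) {e : ℝ} (he : |e| = 1) :
    Tendsto (fun N : ℕ => ∑ n ∈ Finset.Icc 1 N, e ^ n / (n : ℝ) ^ s) atTop
      (𝓝 (eulerSum1 s e)) := by
  refine tendsto_nhds_limUnder (exists_tendsto_sum_div_pow (C := 1) hs fun n hn => ?_)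
  rw [abs_pow, he, one_pow, one_mul]
  exact one_le_harmonicReal hn

theorem tendsto_eulerSum2 {s t : ℕ} (hs : 2 ≤ s) (ht : 1 ≤ t) {e f : ℝ}
    (he : |e| = 1) (hf : |f| = 1) :
    Tendsto (fun N : ℕ => ∑ n₁ ∈ Finset.Icc 1 N, ∑ n₂ ∈ Finset.Ico 1 n₁,
      e ^ n₁ * f ^ n₂ / ((n₁ : ℝ) ^ s * (n₂ : ℝ) ^ t)) atTop (𝓝 (eulerSum2 s t e f)) := by
  refine tendsto_nhds_limUnder ?_
  obtain ⟨l, hl⟩ := exists_tendsto_sum_div_pow (C := 1) hs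
    (g := fun n => e ^ n * ∑ j ∈ Finset.Ico 1 n, f ^ j / (j : ℝ) ^ t) fun n hn => by
      rw [abs_mul, abs_pow, he, one_pow, one_mul]
      refine abs_sum_Ico_le_harmonicReal zero_le_one fun j hj => ?_
      rw [abs_div, abs_pow, hf, one_pow, one_mul, abs_of_nonneg (by positivity)]
      exact one_div_pow_le_one_div ht hj
  refine ⟨l, hl.congr fun N => Finset.sum_congr rfl fun n _ => ?_⟩
  rw [Finset.mul_sum, Finset.sum_div]
  refine Finset.sum_congr rfl fun j _ => ?_
  ring

theorem tendsto_tValue2 {s t : ℕ} (hs : 2 ≤ s) (ht : 1 ≤ t) :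
    Tendsto (fun N : ℕ => ∑ m₁ ∈ Finset.Icc 1 N, ∑ m₂ ∈ Finset.Ico 1 m₁,
      if m₁ % 2 = 0 ∧ m₂ % 2 = 1 then 4 / ((m₁ : ℝ) ^ s * (m₂ : ℝ) ^ t) else 0) atTop
      (𝓝 (tValue2 s t)) := by
  refine tendsto_nhds_limUnder ?_
  obtain ⟨l, hl⟩ := exists_tendsto_sum_div_pow (C := 4) hs
    (g := fun n => ∑ j ∈ Finset.Ico 1 n,
      if n % 2 = 0 ∧ j % 2 = 1 then 4 * (1 / (j : ℝ) ^ t) else 0) fun n hn => by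
      refine abs_sum_Ico_le_harmonicReal (by norm_num) fun j hj => ?_
      split_ifs
      · rw [abs_of_nonneg (by positivity)]
        gcongr 4 * ?_
        exact one_div_pow_le_one_div ht hj
      · rw [abs_zero]
        positivity
  refine ⟨l, hl.congr fun N => Finset.sum_congr rfl fun n _ => ?_⟩
  rw [Finset.sum_div]
  refine Finset.sum_congr rfl fun j _ => ?_
  split_ifs
  · ring
  · simp

theorem exists_tendsto_alternating_harmonic :
    ∃ l, Tendsto (fun N : ℕ => ∑ n ∈ Finset.Icc 1 N, (-1 : ℝ) ^ n / n) atTop (𝓝 l) := by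
  have hanti : Antitone fun n : ℕ => 1 / ((n : ℝ) + 1) := fun a b hab => by
    have : (a : ℝ) ≤ b := by exact_mod_cast hab
    dsimp only
    gcongr
  obtain ⟨l, hl⟩ := hanti.tendsto_alternating_series_of_tendsto_zero
    tendsto_one_div_add_atTop_nhds_zero_nat
  refine ⟨-l, hl.neg.congr fun N => ?_⟩
  induction N with
  | zero => simp
  | succ N ih =>
    rw [Finset.sum_Icc_succ_top (by omega), ← ih, Finset.sum_range_succ]
    push_cast
    ring

/-- Abel summation for a product of two partial sums. -/
theorem sum_Icc_mul_sum_Ico (x y : ℕ → ℝ) (N : ℕ) :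
    ∑ n ∈ Finset.Icc 1 N, x n * ∑ j ∈ Finset.Ico 1 n, y j
      = (∑ n ∈ Finset.Icc 1 N, x n) * ∑ n ∈ Finset.Icc 1 N, y n
        - ∑ n ∈ Finset.Icc 1 N, y n * ∑ j ∈ Finset.Icc 1 n, x j := by
  induction N with
  | zero => simp
  | succ N ih =>
    have hI : Finset.Ico 1 (N + 1) = Finset.Icc 1 N := by
      ext
      simp only [Finset.mem_Ico, Finset.mem_Icc]
      omega
    simp only [Finset.sum_Icc_succ_top (show 1 ≤ N + 1 by omega)]
    rw [ih, hI]
    ring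

theorem tendsto_eulerSum2_one_left {t : ℕ} (ht : 2 ≤ t) {f : ℝ} (hf : |f| = 1) :
    Tendsto (fun N : ℕ => ∑ n₁ ∈ Finset.Icc 1 N, ∑ n₂ ∈ Finset.Ico 1 n₁,
      (-1 : ℝ) ^ n₁ * f ^ n₂ / ((n₁ : ℝ) ^ 1 * (n₂ : ℝ) ^ t)) atTop
      (𝓝 (eulerSum2 1 t (-1) f)) := by
  refine tendsto_nhds_limUnder ?_
  obtain ⟨l₁, h₁⟩ := exists_tendsto_alternating_harmonic
  have h₂ := tendsto_eulerSum1 ht hf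
  obtain ⟨l₃, h₃⟩ := exists_tendsto_sum_div_pow (C := 1) ht
    (g := fun n => f ^ n * ∑ j ∈ Finset.Icc 1 n, (-1 : ℝ) ^ j / j) fun n _ => by
      rw [abs_mul, abs_pow, hf, one_pow, one_mul, one_mul]
      refine (Finset.abs_sum_le_sum_abs _ _).trans (le_of_eq ?_)
      refine Finset.sum_congr rfl fun j _ => ?_
      rw [abs_div, abs_pow, abs_neg, abs_one, one_pow, Nat.abs_cast]
  refine ⟨_, ((h₁.mul h₂).sub h₃).congr fun N => ?_⟩
  have h := sum_Icc_mul_sum_Ico (fun n => (-1 : ℝ) ^ n / n) (fun n => f ^ n / (n : ℝ) ^ t) N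
  have e₁ : ∑ n₁ ∈ Finset.Icc 1 N, ∑ n₂ ∈ Finset.Ico 1 n₁,
      (-1 : ℝ) ^ n₁ * f ^ n₂ / ((n₁ : ℝ) ^ 1 * (n₂ : ℝ) ^ t)
      = ∑ n ∈ Finset.Icc 1 N, (-1 : ℝ) ^ n / n * ∑ j ∈ Finset.Ico 1 n, f ^ j / (j : ℝ) ^ t := by
    refine Finset.sum_congr rfl fun n _ => ?_
    rw [Finset.mul_sum]
    refine Finset.sum_congr rfl fun j _ => ?_
    ring
  rw [e₁, h]
  congr 1
  refine Finset.sum_congr rfl fun n _ => ?_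
  ring

theorem sum_one_div_pow_mul_pow_s4 {m n : ℝ} (hm : m ≠ 0) (hn : n ≠ 0) (hmn : m - n ≠ 0) (k : ℕ) :
    ∑ a ∈ Finset.Icc 2 (k + 2), 1 / (m ^ a * n ^ (k + 3 - a))
      = 1 / n ^ (k + 2) * (1 / (m - n) - 1 / m) - 1 / m ^ (k + 2) * (1 / (m - n)) := by
  induction k with
  | zero =>
    simp
    field_simp
    ring
  | succ k ih =>
    rw [show k + 1 + 2 = (k + 2) + 1 by ring, Finset.sum_Icc_succ_top (by omega)]
    have h : ∑ a ∈ Finset.Icc 2 (k + 2), 1 / (m ^ a * n ^ (k + 1 + 3 - a))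
        = (∑ a ∈ Finset.Icc 2 (k + 2), 1 / (m ^ a * n ^ (k + 3 - a))) * (1 / n) := by
      rw [Finset.sum_mul]
      refine Finset.sum_congr rfl fun a ha => ?_
      have := Finset.mem_Icc.mp ha
      rw [show k + 1 + 3 - a = (k + 3 - a) + 1 by omega, pow_succ]
      field_simp
    rw [h, ih, show k + 1 + 3 - (k + 2 + 1) = 1 by omega]
    field_simp
    ring

theorem oddRecip_nonneg (m : ℕ) : 0 ≤ oddRecip m := by
  unfold oddRecip
  split_ifs <;> positivity

theorem oddRecip_le (m : ℕ) : oddRecip m ≤ 1 / (m : ℝ) := by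
  unfold oddRecip
  split_ifs
  · rfl
  · positivity

theorem sum_oddRecip_sub_nonneg {n N : ℕ} (hn : n ≤ N) :
    0 ≤ ∑ j ∈ Finset.Icc 1 N, oddRecip j - ∑ j ∈ Finset.Icc 1 (N - n), oddRecip j := by
  rw [sub_nonneg]
  exact Finset.sum_le_sum_of_subset_of_nonneg (Finset.Icc_subset_Icc_right (by omega))
    fun j _ _ => oddRecip_nonneg j

theorem sum_oddRecip_sub_le (n M : ℕ) :
    ∑ j ∈ Finset.Icc 1 (M + n), oddRecip j - ∑ j ∈ Finset.Icc 1 M, oddRecip j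
      ≤ n * (1 / ((M : ℝ) + 1)) := by
  induction n with
  | zero => simp
  | succ n ih =>
    rw [← add_assoc, Finset.sum_Icc_succ_top (by omega)]
    have h₁ := oddRecip_le (M + n + 1)
    have h₂ : 1 / ((M + n + 1 : ℕ) : ℝ) ≤ 1 / ((M : ℝ) + 1) := by
      push_cast
      gcongr
      linarith [(Nat.cast_nonneg n : (0 : ℝ) ≤ n)]
    push_cast
    linarith

theorem sumFormulaError_nonneg (v N : ℕ) : 0 ≤ sumFormulaError v N := by
  refine Finset.sum_nonneg fun n hn => mul_nonneg ?_ ?_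
  · split_ifs <;> positivity
  · exact sum_oddRecip_sub_nonneg (Finset.mem_Icc.mp hn).2

theorem sumFormulaError_le {v : ℕ} (hv : 2 ≤ v) (N : ℕ) :
    sumFormulaError v N ≤ 2 * (harmonicReal N / N) := by
  have hterm : ∀ n ∈ Finset.Icc 1 N, (if n % 2 = 1 then 1 / (n : ℝ) ^ v else 0)
      * (∑ j ∈ Finset.Icc 1 N, oddRecip j - ∑ j ∈ Finset.Icc 1 (N - n), oddRecip j)
      ≤ 1 / (N : ℝ) * (1 / (n : ℝ) + 1 / ((N + 1 - n : ℕ) : ℝ)) := by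
    intro n hn
    obtain ⟨hn1, hnN⟩ := Finset.mem_Icc.mp hn
    obtain ⟨M, rfl⟩ := Nat.exists_eq_add_of_le' hnN
    have hn' : (1 : ℝ) ≤ n := by exact_mod_cast hn1
    have hM : (0 : ℝ) ≤ M := Nat.cast_nonneg M
    have hpow : (n : ℝ) ^ 2 ≤ (n : ℝ) ^ v := pow_le_pow_right₀ hn' hv
    have hle := sum_oddRecip_sub_le n M
    have hnn := sum_oddRecip_sub_nonneg hnN
    rw [Nat.add_sub_cancel] at hnn ⊢
    rw [show M + n + 1 - n = M + 1 by omega]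
    push_cast
    calc _ ≤ 1 / (n : ℝ) ^ 2 * (n * (1 / ((M : ℝ) + 1))) := by
          refine mul_le_mul ?_ hle hnn (by positivity)
          split_ifs
          · gcongr
          · positivity
      _ ≤ _ := by
          have : 1 / (n : ℝ) ^ 2 * (n * (1 / ((M : ℝ) + 1)))
              = 1 / ((M : ℝ) + n + 1) * (1 / (n : ℝ) + 1 / ((M : ℝ) + 1)) := by
            field_simp
            ring
          rw [this]
          gcongr ?_ * _
          exact one_div_le_one_div_of_le (by positivity) (by linarith)
  refine (Finset.sum_le_sum hterm).trans (le_of_eq ?_)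
  have hrefl : ∑ n ∈ Finset.Icc 1 N, 1 / ((N + 1 - n : ℕ) : ℝ) = harmonicReal N := by
    have h := Finset.sum_Ico_reflect (fun j => 1 / (j : ℝ)) 1 (m := N + 1) (n := N + 1) (by omega)
    have hI : Finset.Ico 1 (N + 1) = Finset.Icc 1 N := by
      ext
      simp only [Finset.mem_Ico, Finset.mem_Icc]
      omega
    rw [show N + 1 + 1 - (N + 1) = 1 by omega, show N + 1 + 1 - 1 = N + 1 by omega, hI] at h
    exact h
  rw [← Finset.mul_sum, Finset.sum_add_distrib, hrefl]
  change 1 / (N : ℝ) * (harmonicReal N + harmonicReal N) = _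
  ring

theorem tendsto_sumFormulaError {v : ℕ} (hv : 2 ≤ v) :
    Tendsto (sumFormulaError v) atTop (𝓝 0) := by
  refine squeeze_zero (sumFormulaError_nonneg v) (sumFormulaError_le hv) ?_
  simpa using tendsto_harmonicReal_div.const_mul 2

theorem sumFormulaError_succ (v N : ℕ) :
    sumFormulaError v (N + 1) = sumFormulaError v N
      + ∑ n ∈ Finset.Ico 1 (N + 1), (if n % 2 = 1 then 1 / (n : ℝ) ^ v else 0)
          * (oddRecip (N + 1) - oddRecip (N + 1 - n))
      + (if (N + 1) % 2 = 1 then 1 / ((N + 1 : ℕ) : ℝ) ^ v else 0)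
          * (∑ j ∈ Finset.Ico 1 (N + 1), oddRecip j + oddRecip (N + 1)) := by
  have hI : Finset.Ico 1 (N + 1) = Finset.Icc 1 N := by
    ext
    simp only [Finset.mem_Ico, Finset.mem_Icc]
    omega
  unfold sumFormulaError
  rw [Finset.sum_Icc_succ_top (by omega), hI, ← Finset.sum_add_distrib]
  congr 1
  · refine Finset.sum_congr rfl fun n hn => ?_
    obtain ⟨-, hn⟩ := Finset.mem_Icc.mp hn
    rw [Finset.sum_Icc_succ_top (by omega), show N + 1 - n = (N - n) + 1 by omega,
      Finset.sum_Icc_succ_top (by omega)]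
    ring
  · rw [Finset.sum_Icc_succ_top (by omega)]
    simp

/-- The contribution of a fixed largest index `m` to the sum formula for double T-values. -/
theorem sum_double_T_row (k m : ℕ) (hm : 1 ≤ m) :
    ∑ a ∈ Finset.Icc 2 (k + 2), ∑ n ∈ Finset.Ico 1 m,
        (if m % 2 = 0 ∧ n % 2 = 1 then 4 / ((m : ℝ) ^ a * (n : ℝ) ^ (k + 3 - a)) else 0)
      = 2 * (1 ^ m / (m : ℝ) ^ (k + 3) - (-1) ^ m / (m : ℝ) ^ (k + 3)
          + ∑ n ∈ Finset.Ico 1 m, (-1) ^ m * (-1) ^ n / ((m : ℝ) ^ (k + 2) * (n : ℝ) ^ 1)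
          + ∑ n ∈ Finset.Ico 1 m, (-1) ^ m * (-1) ^ n / ((m : ℝ) ^ 1 * (n : ℝ) ^ (k + 2))
          - ∑ n ∈ Finset.Ico 1 m, (-1) ^ m * 1 ^ n / ((m : ℝ) ^ (k + 2) * (n : ℝ) ^ 1)
          - ∑ n ∈ Finset.Ico 1 m, (-1) ^ m * 1 ^ n / ((m : ℝ) ^ 1 * (n : ℝ) ^ (k + 2)))
        - 4 * (∑ n ∈ Finset.Ico 1 m, (if n % 2 = 1 then 1 / (n : ℝ) ^ (k + 2) else 0)
            * (oddRecip m - oddRecip (m - n))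
          + (if m % 2 = 1 then 1 / (m : ℝ) ^ (k + 2) else 0)
            * (∑ j ∈ Finset.Ico 1 m, oddRecip j + oddRecip m)) := by
  have hm0 : (m : ℝ) ≠ 0 := by exact_mod_cast (by omega : m ≠ 0)
  rw [Finset.sum_comm]
  rcases Nat.even_or_odd m with hev | hodd
  · have hm2 : m % 2 = 0 := Nat.even_iff.mp hev
    have hrefl : ∑ n ∈ Finset.Ico 1 m, oddRecip (m - n) = ∑ n ∈ Finset.Ico 1 m, oddRecip n := by
      have h := Finset.sum_Ico_reflect oddRecip 1 (m := m) (n := m) (by omega)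
      rwa [show m + 1 - m = 1 by omega, Nat.add_sub_cancel] at h
    have hzero : ∑ n ∈ Finset.Ico 1 m,
        4 / (m : ℝ) ^ (k + 2) * (oddRecip n - oddRecip (m - n)) = 0 := by
      rw [← Finset.mul_sum, Finset.sum_sub_distrib, hrefl, sub_self, mul_zero]
    rw [← sub_eq_zero]
    refine Eq.trans ?_ hzero
    simp only [hev.neg_one_pow, one_pow, hm2, zero_ne_one, if_false, zero_mul, add_zero, sub_self,
      zero_add]
    simp only [← Finset.sum_add_distrib, ← Finset.sum_sub_distrib, Finset.mul_sum]
    refine Finset.sum_congr rfl fun n hn => ?_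
    obtain ⟨hn1, hnm⟩ := Finset.mem_Ico.mp hn
    have hn0 : (n : ℝ) ≠ 0 := by exact_mod_cast (by omega : n ≠ 0)
    have hmn : (m : ℝ) - n ≠ 0 := sub_ne_zero.mpr (by exact_mod_cast (by omega : m ≠ n))
    rcases Nat.even_or_odd n with hne | hno
    · have hn2 : n % 2 = 0 := Nat.even_iff.mp hne
      have hs2 : (m - n) % 2 = 0 := by omega
      simp [hne.neg_one_pow, hn2, oddRecip, hs2]
    · have hn2 : n % 2 = 1 := Nat.odd_iff.mp hno
      have hs2 : (m - n) % 2 = 1 := by omega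
      have hgeom : ∑ a ∈ Finset.Icc 2 (k + 2), 4 / ((m : ℝ) ^ a * (n : ℝ) ^ (k + 3 - a))
          = 4 * (1 / (n : ℝ) ^ (k + 2) * (1 / ((m : ℝ) - n) - 1 / m)
            - 1 / (m : ℝ) ^ (k + 2) * (1 / ((m : ℝ) - n))) := by
        rw [← sum_one_div_pow_mul_pow_s4 hm0 hn0 hmn k, Finset.mul_sum]
        refine Finset.sum_congr rfl fun a _ => ?_
        ring
      simp only [hn2, and_self, if_true, hgeom, hno.neg_one_pow, oddRecip, hs2, hm2, zero_ne_one,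
        if_false, Nat.cast_sub hnm.le, pow_one]
      ring
  · have hm2 : m % 2 = 1 := Nat.odd_iff.mp hodd
    have hom : oddRecip m = 1 / (m : ℝ) := by simp [oddRecip, hm2]
    simp only [hodd.neg_one_pow, one_pow, hm2, one_ne_zero, false_and, if_true, if_false,
      Finset.sum_const_zero, hom]
    have hsum : ∑ n ∈ Finset.Ico 1 m,
          (if n % 2 = 1 then 1 / (n : ℝ) ^ (k + 2) else 0) * (1 / (m : ℝ) - oddRecip (m - n))
          + 1 / (m : ℝ) ^ (k + 2) * ∑ j ∈ Finset.Ico 1 m, oddRecip j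
        = (∑ n ∈ Finset.Ico 1 m, -1 * (-1) ^ n / ((m : ℝ) ^ (k + 2) * (n : ℝ) ^ 1)
          + ∑ n ∈ Finset.Ico 1 m, -1 * (-1) ^ n / ((m : ℝ) ^ 1 * (n : ℝ) ^ (k + 2))
          - ∑ n ∈ Finset.Ico 1 m, -1 * 1 / ((m : ℝ) ^ (k + 2) * (n : ℝ) ^ 1)
          - ∑ n ∈ Finset.Ico 1 m, -1 * 1 / ((m : ℝ) ^ 1 * (n : ℝ) ^ (k + 2))) * (1 / 2) := by
      simp only [← Finset.sum_add_distrib, ← Finset.sum_sub_distrib, Finset.mul_sum,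
        Finset.sum_mul]
      refine Finset.sum_congr rfl fun n hn => ?_
      obtain ⟨hn1, hnm⟩ := Finset.mem_Ico.mp hn
      rcases Nat.even_or_odd n with hne | hno
      · have hn2 : n % 2 = 0 := Nat.even_iff.mp hne
        simp [hne.neg_one_pow, hn2, oddRecip]
      · have hn2 : n % 2 = 1 := Nat.odd_iff.mp hno
        have hs2 : (m - n) % 2 = 0 := by omega
        simp only [hn2, if_true, hno.neg_one_pow, oddRecip, hs2, zero_ne_one, if_false, pow_one]
        ring
    rw [mul_add (1 / (m : ℝ) ^ (k + 2)), ← add_assoc, hsum, pow_succ (m : ℝ) (k + 2)]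
    ring

theorem sum_double_T_partial (k N : ℕ) :
    ∑ a ∈ Finset.Icc 2 (k + 2), ∑ m ∈ Finset.Icc 1 N, ∑ n ∈ Finset.Ico 1 m,
        (if m % 2 = 0 ∧ n % 2 = 1 then 4 / ((m : ℝ) ^ a * (n : ℝ) ^ (k + 3 - a)) else 0)
      = 2 * (∑ m ∈ Finset.Icc 1 N, 1 ^ m / (m : ℝ) ^ (k + 3)
          - ∑ m ∈ Finset.Icc 1 N, (-1) ^ m / (m : ℝ) ^ (k + 3)
          + ∑ m ∈ Finset.Icc 1 N, ∑ n ∈ Finset.Ico 1 m,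
              (-1) ^ m * (-1) ^ n / ((m : ℝ) ^ (k + 2) * (n : ℝ) ^ 1)
          + ∑ m ∈ Finset.Icc 1 N, ∑ n ∈ Finset.Ico 1 m,
              (-1) ^ m * (-1) ^ n / ((m : ℝ) ^ 1 * (n : ℝ) ^ (k + 2))
          - ∑ m ∈ Finset.Icc 1 N, ∑ n ∈ Finset.Ico 1 m,
              (-1) ^ m * 1 ^ n / ((m : ℝ) ^ (k + 2) * (n : ℝ) ^ 1)
          - ∑ m ∈ Finset.Icc 1 N, ∑ n ∈ Finset.Ico 1 m,
              (-1) ^ m * 1 ^ n / ((m : ℝ) ^ 1 * (n : ℝ) ^ (k + 2)))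
        - 4 * sumFormulaError (k + 2) N := by
  induction N with
  | zero => simp [sumFormulaError]
  | succ N ih =>
    simp only [Finset.sum_Icc_succ_top (show 1 ≤ N + 1 by omega)]
    rw [Finset.sum_add_distrib, ih, sum_double_T_row k (N + 1) (by omega), sumFormulaError_succ]
    ring

/-- Sum formula for double T-values: for `w ≥ 3`, with `v = w − 1`,
`∑_{a+b=w, a≥2} T(a,b) = 2(ζ(w) − ζ(w̄) + ζ(v̄,1̄) + ζ(1̄,v̄) − ζ(v̄,1) − ζ(1̄,v))`. -/
theorem sum_double_T (w : ℕ) (hw : 3 ≤ w) :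
    ∑ a ∈ Finset.Icc 2 (w - 1), tValue2 a (w - a)
      = 2 * (eulerSum1 w 1 - eulerSum1 w (-1)
          + eulerSum2 (w - 1) 1 (-1) (-1) + eulerSum2 1 (w - 1) (-1) (-1)
          - eulerSum2 (w - 1) 1 (-1) 1 - eulerSum2 1 (w - 1) (-1) 1) := by
  obtain ⟨k, rfl⟩ := Nat.exists_eq_add_of_le' hw
  rw [show k + 3 - 1 = k + 2 by omega]
  have hL := tendsto_finsetSum (Finset.Icc 2 (k + 2)) fun a ha =>
    tendsto_tValue2 (s := a) (t := k + 3 - a) (Finset.mem_Icc.mp ha).1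
      (by have := (Finset.mem_Icc.mp ha).2; omega)
  have hneg : |(-1 : ℝ)| = 1 := by simp
  have hv : 2 ≤ k + 2 := by omega
  have hR := ((((((tendsto_eulerSum1 (s := k + 3) (by omega) abs_one).sub
    (tendsto_eulerSum1 (s := k + 3) (by omega) hneg)).add
    (tendsto_eulerSum2 hv le_rfl hneg hneg)).add
    (tendsto_eulerSum2_one_left hv hneg)).sub
    (tendsto_eulerSum2 hv le_rfl hneg abs_one)).sub
    (tendsto_eulerSum2_one_left hv abs_one)).const_mul 2
  have hR' := hR.sub ((tendsto_sumFormulaError hv).const_mul 4)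
  rw [mul_zero, sub_zero] at hR'
  exact tendsto_nhds_unique (hL.congr fun N => sum_double_T_partial k N) hR'
end
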